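/- arXiv:math/0608759 — 4 statements merged into one kernel-verified Lean document; each statement's English description precedes it below -/
import Mathlib

section
/- Let D ≥ 1 and let P_1, …, P_n be partitions of D such that Σ_{i=1}^n c(P_i) = D − 1. Then there exist permutations σ_1, …, σ_n of {1, …, D} such that for each i the multiset of cycle lengths of σ_i (including fixed points as cycles of length 1) equals P_i, and the product σ_1 σ_2 ⋯ σ_n equals the cyclic permutation (1 2 3 … D). -/
open Equiv Equiv.Perm in
/-- Inserting a new point into a cycle yields a cycle. -/
theorem isCycle_swap_mul_of_fixed {α : Type*} [DecidableEq α] [Fintype α] {c : Perm α}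
    (hc : c.IsCycle) {p x : α} (hp : c p = p) (hx : c x ≠ x) :
    (swap p x * c).IsCycle := by
  have hL : 2 ≤ (c.toList x).length := two_le_length_toList_iff_mem_support.2 (mem_support.2 hx)
  obtain ⟨y, l, hl⟩ : ∃ y l, c.toList x = x :: y :: l := by
    rcases h : c.toList x with _ | ⟨a, _ | ⟨y, l⟩⟩
    · simp [h] at hL
    · simp [h] at hL
    · have h0 := toList_getElem_zero c x (mem_support.2 hx)
      simp only [h, List.getElem_cons_zero] at h0
      exact ⟨y, l, by rw [h0]⟩
  have hnd : (p :: c.toList x).Nodup := by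
    refine List.nodup_cons.2 ⟨fun h => ?_, nodup_toList c x⟩
    have := (mem_toList_iff.1 h).1
    exact hx ((SameCycle.apply_eq_self_iff this).2 hp)
  have hform : swap p x * c = (p :: c.toList x).formPerm := by
    rw [hl, List.formPerm_cons_cons, ← hl, formPerm_toList, hc.cycleOf_eq hx]
  rw [hform]
  exact List.isCycle_formPerm hnd (by simp [hl])

open Equiv Equiv.Perm in
theorem cycleType_swap_mul_of_fixed_of_fixed {α : Type*} [DecidableEq α] [Fintype α]
    {σ : Perm α} {p x : α} (hpx : p ≠ x) (hp : σ p = p) (hx : σ x = x) :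
    (swap p x * σ).cycleType = 2 ::ₘ σ.cycleType := by
  have hd : Disjoint (swap p x) σ := by
    rw [disjoint_iff_disjoint_support, support_swap hpx]
    simp [hp, hx]
  rw [hd.cycleType_mul, (isCycle_swap hpx).cycleType, card_support_swap hpx]
  rfl

open Equiv Equiv.Perm in
theorem cycleType_swap_mul_of_fixed_of_mem {α : Type*} [DecidableEq α] [Fintype α]
    {σ c : Perm α} {p x : α} (hp : σ p = p) (hc : c ∈ σ.cycleFactorsFinset)
    (hx : x ∈ c.support) :
    (swap p x * σ).cycleType = (c.support.card + 1) ::ₘ σ.cycleType.erase c.support.card := by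
  have hcyc := (mem_cycleFactorsFinset_iff.1 hc).1
  have hpc : p ∉ c.support := fun h =>
    mem_support.1 (mem_cycleFactorsFinset_support_le hc h) hp
  have hcp : c p = p := notMem_support.1 hpc
  have hpx : p ≠ x := by rintro rfl; exact hpc hx
  have hdc : Disjoint (σ * c⁻¹) c := disjoint_mul_inv_of_mem_cycleFactorsFinset hc
  have hσ : σ = c * (σ * c⁻¹) := by
    rw [← hdc.commute.eq]; group
  have hcx : (σ * c⁻¹) x = x := (hdc x).resolve_right (mem_support.1 hx)
  have hrp : (σ * c⁻¹) p = p := by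
    rw [Perm.mul_apply, inv_eq_iff_eq.2 hcp.symm, hp]
  have hsupp : (swap p x * c).support = insert p c.support := by
    ext z
    simp only [mem_support, Finset.mem_insert, Perm.mul_apply]
    by_cases hzp : z = p
    · subst hzp; simp [hcp, hpx.symm]
    by_cases hz : c z = x
    · have : c z ≠ z := fun h => mem_support.1 hx (by rw [← hz, h, h])
      rw [hz, swap_apply_right]
      exact iff_of_true (Ne.symm hzp) (Or.inr (hz ▸ this))
    · have : c z ≠ p := fun h => hzp (c.injective (h.trans hcp.symm))
      rw [swap_apply_of_ne_of_ne this hz]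
      simp [hzp]
  have hd : Disjoint (swap p x * c) (σ * c⁻¹) := by
    rw [disjoint_iff_disjoint_support, hsupp, Finset.disjoint_insert_left]
    exact ⟨by simpa [notMem_support] using hrp, (disjoint_iff_disjoint_support.1 hdc).symm⟩
  have h1 : (swap p x * σ).cycleType = (swap p x * c).cycleType + (σ * c⁻¹).cycleType := by
    rw [← hd.cycleType_mul, mul_assoc, ← hσ]
  have h2 : σ.cycleType = c.cycleType + (σ * c⁻¹).cycleType := by
    rw [← hdc.symm.cycleType_mul, ← hσ]
  rw [h1, h2, (isCycle_swap_mul_of_fixed hcyc hcp (mem_support.1 hx)).cycleType, hcyc.cycleType,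
    hsupp, Finset.card_insert_of_notMem hpc]
  simp

open Equiv Equiv.Perm in
/-- Any part of the cycle partition of `σ` on `S` can be enlarged by a new point. -/
theorem exists_cycleType_swap_mul {α : Type*} [DecidableEq α] [Fintype α] {σ : Perm α}
    {S : Finset α} {p : α} (hpS : p ∉ S) (hσ : σ.support ⊆ S) {P : Multiset ℕ}
    (hpos : ∀ a ∈ P, 0 < a) (hsum : P.sum = S.card)
    (hP : σ.cycleType = P.filter (2 ≤ ·)) {k : ℕ} (hk : k ∈ P) :
    ∃ x ∈ S, (swap p x * σ).cycleType = ((k + 1) ::ₘ P.erase k).filter (2 ≤ ·) := by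
  have hp : σ p = p := notMem_support.1 fun h => hpS (hσ h)
  have hkpos := hpos k hk
  rw [Multiset.filter_cons_of_pos _ (by omega : 2 ≤ k + 1)]
  rcases (by omega : k = 1 ∨ 2 ≤ k) with rfl | hk2
  · have hlt : σ.support.card < S.card := by
      rw [← sum_cycleType, hP, ← hsum, ← Multiset.sum_filter_add_sum_filter_not (s := P) (2 ≤ ·)]
      have : 1 ∈ P.filter (fun a => ¬ 2 ≤ a) := Multiset.mem_filter.2 ⟨hk, by simp⟩
      have := Multiset.le_sum_of_mem this
      omega
    obtain ⟨x, hxS, hx⟩ := Finset.exists_mem_notMem_of_card_lt_card hlt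
    refine ⟨x, hxS, ?_⟩
    rw [cycleType_swap_mul_of_fixed_of_fixed (ne_of_mem_of_not_mem hxS hpS).symm hp
      (notMem_support.1 hx), hP]
    congr 1
    rw [← Multiset.cons_erase hk]
    simp
  · have : k ∈ σ.cycleType := hP ▸ Multiset.mem_filter.2 ⟨hk, hk2⟩
    rw [cycleType_def, Multiset.mem_map] at this
    obtain ⟨c, hc, hck⟩ := this
    have hck : c.support.card = k := hck
    obtain ⟨x, hx⟩ : c.support.Nonempty := Finset.card_pos.1 (by omega)
    refine ⟨x, hσ (mem_cycleFactorsFinset_support_le hc hx), ?_⟩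
    rw [cycleType_swap_mul_of_fixed_of_mem hp hc hx, hck, hP]
    congr 1
    obtain ⟨Q, rfl⟩ := Multiset.exists_cons_of_mem hk
    simp [hk2]

open Equiv Equiv.Perm in
theorem cycleType_swap_mul_of_full_cycle {α : Type*} [DecidableEq α] [Fintype α] {σ : Perm α}
    {S : Finset α} {p y : α} (hpS : p ∉ S) (hy : y ∈ S) (hσ : σ.support ⊆ S)
    (hP : σ.cycleType = ({S.card} : Multiset ℕ).filter (2 ≤ ·)) :
    (swap p y * σ).cycleType = {S.card + 1} := by
  have hp : σ p = p := notMem_support.1 fun h => hpS (hσ h)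
  have hS : 0 < S.card := Finset.card_pos.2 ⟨y, hy⟩
  have hpy : p ≠ y := fun h => hpS (h ▸ hy)
  rcases (by omega : S.card = 1 ∨ 2 ≤ S.card) with h1 | h2
  · have hσ1 : σ = 1 := by rw [← cycleType_eq_zero, hP, h1]; rfl
    subst hσ1
    rw [cycleType_swap_mul_of_fixed_of_fixed hpy rfl rfl, h1, cycleType_one]
    rfl
  · rw [Multiset.filter_singleton, if_pos h2] at hP
    have hcyc : σ.IsCycle := card_cycleType_eq_one.1 (by rw [hP]; rfl)
    have hcard : σ.support.card = S.card := by rw [← sum_cycleType, hP, Multiset.sum_singleton]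
    have hsupp : σ.support = S := Finset.eq_of_subset_of_card_le hσ hcard.ge
    have hmem : σ ∈ σ.cycleFactorsFinset := by simp [hcyc.cycleFactorsFinset_eq_singleton]
    rw [cycleType_swap_mul_of_fixed_of_mem hp hmem (hsupp ▸ hy), hP, hsupp]
    simp

open Equiv Equiv.Perm in
/-- A transposition involving a point fixed by all factors can be moved to the front
of the product. -/
theorem exists_prod_update_swap_mul {α : Type*} [DecidableEq α] [Fintype α] {S : Finset α}
    {p : α} (hpS : p ∉ S) {n : ℕ} (σ : Fin n → Perm α) (hσ : ∀ j, (σ j).support ⊆ S)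
    (i : Fin n) {x : α} (hx : x ∈ S) :
    ∃ y ∈ S, (List.ofFn (Function.update σ i (swap p x * σ i))).prod =
      swap p y * (List.ofFn σ).prod := by
  induction n with
  | zero => exact i.elim0
  | succ n ih =>
    simp only [List.ofFn_succ, List.prod_cons]
    cases i using Fin.cases with
    | zero => exact ⟨x, hx, by simp [mul_assoc]⟩
    | succ i =>
      obtain ⟨y, hy, h⟩ := ih (fun j => σ j.succ) (fun j => hσ _) i
      refine ⟨σ 0 y, ?_, ?_⟩
      · by_cases hf : σ 0 y = y
        · rwa [hf]
        · exact hσ 0 (apply_mem_support.2 (mem_support.2 hf))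
      · have hp : σ 0 p = p := notMem_support.1 fun h => hpS (hσ 0 h)
        have hu : (fun j : Fin n => Function.update σ i.succ (swap p x * σ i.succ) j.succ) =
            Function.update (fun j => σ j.succ) i (swap p x * σ i.succ) := by
          ext1 j
          simp [Function.update_apply]
        rw [hu, h, Function.update_of_ne (Fin.succ_ne_zero i).symm, ← mul_assoc,
          mul_swap_eq_swap_mul, hp, mul_assoc]

theorem two_mul_card_le_sum {P : Multiset ℕ} (hpos : ∀ a ∈ P, 0 < a) (h1 : 1 ∉ P) :
    2 * P.card ≤ P.sum := by
  rw [mul_comm]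
  refine Multiset.card_nsmul_le_sum (s := P) (a := 2) fun a ha => ?_
  have := hpos a ha
  have : a ≠ 1 := fun h => h1 (h ▸ ha)
  omega

theorem card_le_sum_of_pos {P : Multiset ℕ} (hpos : ∀ a ∈ P, 0 < a) : P.card ≤ P.sum := by
  simpa using Multiset.card_nsmul_le_sum (s := P) (a := 1) hpos

theorem exists_two_le_of_card_lt_sum {P : Multiset ℕ} (h : P.card < P.sum) :
    ∃ a ∈ P, 2 ≤ a := by
  by_contra! hcon
  have := Multiset.sum_le_card_nsmul P 1 fun a ha => Nat.lt_succ_iff.1 (hcon a ha)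
  simp at this
  omega

/-- Some partition has a nontrivial part while all others have a part equal to `1`. -/
theorem exists_two_le_and_forall_one_mem {ι : Type*} [Fintype ι] [DecidableEq ι] {d : ℕ}
    (hd : 1 ≤ d) (P : ι → Multiset ℕ) (hpos : ∀ i, ∀ a ∈ P i, 0 < a)
    (hsum : ∀ i, (P i).sum = d + 1) (hc : ∑ i, (d + 1 - (P i).card) = d) :
    ∃ i, (∃ a ∈ P i, 2 ≤ a) ∧ ∀ j, j ≠ i → 1 ∈ P j := by
  by_cases h : ∃ i, 1 ∉ P i
  · obtain ⟨i, hi⟩ := h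
    have hi2 := two_mul_card_le_sum (hpos i) hi
    rw [hsum] at hi2
    refine ⟨i, exists_two_le_of_card_lt_sum (by rw [hsum]; omega), fun j hj => ?_⟩
    by_contra hj1
    have hj2 := two_mul_card_le_sum (hpos j) hj1
    rw [hsum] at hj2
    have := Finset.sum_le_sum_of_subset (f := fun i => d + 1 - (P i).card)
      (Finset.subset_univ {j, i})
    rw [Finset.sum_pair hj, hc] at this
    omega
  · push Not at h
    obtain ⟨i, -, hi⟩ : ∃ i ∈ Finset.univ, d + 1 - (P i).card ≠ 0 :=
      Finset.exists_ne_zero_of_sum_ne_zero (by omega)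
    exact ⟨i, exists_two_le_of_card_lt_sum (by rw [hsum]; omega), fun j _ => h j⟩

open Equiv Equiv.Perm in
theorem exists_perms_supported_prod_full_cycle {α : Type*} [DecidableEq α] [Fintype α] {n : ℕ}
    {S : Finset α} (hS : S.Nonempty) (P : Fin n → Multiset ℕ)
    (hpos : ∀ i, ∀ a ∈ P i, 0 < a) (hsum : ∀ i, (P i).sum = S.card)
    (hc : ∑ i, (S.card - (P i).card) = S.card - 1) :
    ∃ σ : Fin n → Perm α,
      (∀ i, (σ i).support ⊆ S ∧ (σ i).cycleType = (P i).filter (2 ≤ ·)) ∧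
      (List.ofFn σ).prod.support ⊆ S ∧
      (List.ofFn σ).prod.cycleType = ({S.card} : Multiset ℕ).filter (2 ≤ ·) := by
  induction hS using Finset.Nonempty.cons_induction generalizing P with
  | singleton p =>
    refine ⟨fun _ => 1, fun i => ⟨by simp, ?_⟩, by simp, by simp [Multiset.filter_singleton]⟩
    rw [cycleType_one, eq_comm, Multiset.filter_eq_nil]
    intro a ha
    have := Multiset.le_sum_of_mem ha
    rw [hsum, Finset.card_singleton] at this
    omega
  | cons p S hpS hS ih =>
    rw [Finset.card_cons, Finset.cons_eq_insert]
    simp only [Finset.card_cons] at hsum hc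
    have hS1 : 1 ≤ S.card := hS.card_pos
    obtain ⟨i, ⟨a, ha, ha2⟩, hone⟩ :=
      exists_two_le_and_forall_one_mem hS1 P hpos hsum (by simpa using hc)
    obtain ⟨k, rfl⟩ : ∃ k, a = k + 1 := ⟨a - 1, by omega⟩
    obtain ⟨R, hR⟩ := Multiset.exists_cons_of_mem ha
    let Q : Fin n → Multiset ℕ := Function.update (fun j => (P j).erase 1) i (k ::ₘ R)
    have hQi : Q i = k ::ₘ R := Function.update_self ..
    have hQj : ∀ j, j ≠ i → P j = 1 ::ₘ Q j := fun j hj => by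
      simp only [Q, Function.update_of_ne hj, Multiset.cons_erase (hone j hj)]
    have hQpos : ∀ j, ∀ b ∈ Q j, 0 < b := by
      intro j b hb
      by_cases hj : j = i
      · subst hj
        rw [hQi, Multiset.mem_cons] at hb
        rcases hb with rfl | hb
        · omega
        · exact hpos j b (hR ▸ Multiset.mem_cons_of_mem hb)
      · exact hpos j b (hQj j hj ▸ Multiset.mem_cons_of_mem hb)
    have hQsum : ∀ j, (Q j).sum = S.card := by
      intro j
      have h := hsum j
      by_cases hj : j = i
      · subst hj
        rw [hR, Multiset.sum_cons] at h
        rw [hQi, Multiset.sum_cons]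
        omega
      · rw [hQj j hj, Multiset.sum_cons] at h
        omega
    have hQc : ∑ j, (S.card - (Q j).card) = S.card - 1 := by
      rw [← Finset.add_sum_erase _ _ (Finset.mem_univ i)] at hc ⊢
      have hrest : ∑ j ∈ Finset.univ.erase i, (S.card - (Q j).card) =
          ∑ j ∈ Finset.univ.erase i, (S.card + 1 - (P j).card) := by
        refine Finset.sum_congr rfl fun j hj => ?_
        rw [hQj j (Finset.ne_of_mem_erase hj), Multiset.card_cons]
        omega
      have hle := card_le_sum_of_pos (hQpos i)
      rw [hQsum, hQi, Multiset.card_cons] at hle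
      rw [hR, Multiset.card_cons] at hc
      rw [hrest, hQi, Multiset.card_cons]
      omega
    obtain ⟨σ, hσ, hprod, hprodType⟩ := ih Q hQpos hQsum hQc
    obtain ⟨x, hxS, hx⟩ := exists_cycleType_swap_mul hpS (hσ i).1 (hQpos i) (hQsum i) (hσ i).2
      (k := k) (by simp [hQi])
    obtain ⟨y, hyS, hy⟩ := exists_prod_update_swap_mul hpS σ (fun j => (hσ j).1) i hxS
    have hswap : ∀ (τ : Perm α) (z : α), z ∈ S → τ.support ⊆ S →
        (swap p z * τ).support ⊆ insert p S := by
      intro τ z hz hτ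
      refine (support_mul_le _ _).trans (sup_le ?_ (hτ.trans (Finset.subset_insert _ _)))
      rw [support_swap (ne_of_mem_of_not_mem hz hpS).symm]
      exact Finset.insert_subset_insert _ (Finset.singleton_subset_iff.2 hz)
    refine ⟨Function.update σ i (swap p x * σ i), fun j => ?_, ?_, ?_⟩
    · by_cases hj : j = i
      · subst hj
        rw [Function.update_self]
        refine ⟨hswap _ _ hxS (hσ j).1, ?_⟩
        rw [hx, hQi, Multiset.erase_cons_head, hR]
      · rw [Function.update_of_ne hj]
        refine ⟨(hσ j).1.trans (Finset.subset_insert _ _), ?_⟩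
        rw [(hσ j).2, hQj j hj]
        simp
    · rw [hy]
      exact hswap _ _ hyS hprod
    · rw [hy, cycleType_swap_mul_of_full_cycle hpS hyS hprod hprodType,
        Multiset.filter_singleton, if_pos (by omega)]

/-- **Realizing cycle types with product a full cycle.**
Let `D ≥ 1` and let `P 1, …, P n` be partitions of `D` (multisets of positive
integers summing to `D`) such that `Σᵢ c(Pᵢ) = D − 1`, where
`c(P) = D − (number of parts of P)`.  Then there exist permutations
`σ 1, …, σ n` of `{1, …, D}` such that the full multiset of cycle lengths of
`σ i` (fixed points counted as cycles of length `1`, i.e. the cycle type of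
`σ i` together with one `1` for each fixed point) equals `P i` for every `i`,
and the product `σ 1 · σ 2 ⋯ σ n` is the cyclic permutation `(1 2 3 … D)`. -/
theorem exists_perms_with_cycle_types_prod_cycle
    (D n : ℕ) (hD : 1 ≤ D)
    (P : Fin n → Multiset ℕ)
    (hpos : ∀ i : Fin n, ∀ a ∈ P i, 0 < a)
    (hsum : ∀ i : Fin n, (P i).sum = D)
    (hc : ∑ i : Fin n, (D - (P i).card) = D - 1) :
    ∃ σ : Fin n → Equiv.Perm (Fin D),
      (∀ i : Fin n,
        (σ i).cycleType + Multiset.replicate (D - ((σ i).cycleType).sum) 1 = P i) ∧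
      (List.ofFn σ).prod = finRotate D := by
  have : NeZero D := ⟨by omega⟩
  obtain ⟨σ, hσ, -, hprod⟩ := exists_perms_supported_prod_full_cycle
    (S := (Finset.univ : Finset (Fin D))) Finset.univ_nonempty P hpos
    (by simpa using hsum) (by simpa using hc)
  rw [Finset.card_univ, Fintype.card_fin] at hprod
  have hrot : (finRotate D).cycleType = ({D} : Multiset ℕ).filter (2 ≤ ·) := by
    rcases (by omega : D = 1 ∨ 2 ≤ D) with rfl | h2
    · rw [Subsingleton.elim (finRotate 1) 1, Equiv.Perm.cycleType_one]
      rfl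
    · rw [cycleType_finRotate_of_le h2, Multiset.filter_singleton, if_pos h2]
  obtain ⟨g, hg⟩ := isConj_iff.1
    (Equiv.Perm.isConj_iff_cycleType_eq.2 (hprod.trans hrot.symm))
  refine ⟨fun i => g * σ i * g⁻¹, fun i => ?_, ?_⟩
  · rw [Equiv.Perm.cycleType_conj, (hσ i).2]
    have hsplit := Multiset.filter_add_not (2 ≤ ·) (P i)
    have hones : (P i).filter (fun a => ¬ 2 ≤ a) =
        Multiset.replicate ((P i).filter (fun a => ¬ 2 ≤ a)).card 1 := by
      refine Multiset.eq_replicate_card.2 fun a ha => ?_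
      obtain ⟨ha, ha2⟩ := Multiset.mem_filter.1 ha
      have := hpos i a ha
      omega
    have hcard : D - ((P i).filter (2 ≤ ·)).sum = ((P i).filter (fun a => ¬ 2 ≤ a)).card := by
      have h := congrArg Multiset.sum hsplit
      rw [Multiset.sum_add, hsum, hones, Multiset.sum_replicate, smul_eq_mul, mul_one] at h
      omega
    rw [hcard, ← hones, hsplit]
  · rw [← hg, ← MulAut.conj_apply, map_list_prod, List.map_ofFn]
    rfl
end

section
/- Let F : T → T be a polynomial-like branched covering of a simplicial tree. Then there exists an integer N(F) > 0 such that h(F(v)) = h(v) + N(F) for every vertex v ∈ V(T), where h is the combinatorial height. -/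
open SimpleGraph Function Opposite

/-- A locally finite simplicial tree together with a self-map that is a
branched covering: a simplicial map (edges map onto edges) such that the
induced map on edges adjacent to any vertex is surjective onto the edges
adjacent to the image vertex, and every vertex has finitely many preimages. -/
structure TreeDyn (V : Type) where
  G : SimpleGraph V
  isTree : G.IsTree
  locFin : ∀ v : V, (G.neighborSet v).Finite
  F : V → V
  adjMap : ∀ ⦃v w : V⦄, G.Adj v w → G.Adj (F v) (F w)
  edgeSurj : ∀ ⦃v w' : V⦄, G.Adj (F v) w' → ∃ w : V, G.Adj v w ∧ F w = w'
  finFibers : ∀ v' : V, {v : V | F v = v'}.Finite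

namespace TreeDyn

variable {V : Type}

/-- A local degree function for the branched covering `T.F`: positive on
vertices and edges (edges adjacent to `v` are recorded by their other
endpoint), symmetric on edges, satisfying the Riemann–Hurwitz style
inequality `2 deg(v) - 2 ≥ Σ (deg e - 1)` at each vertex, and the local
equality `deg v = Σ {deg e' : e' adjacent to v, F(e') = F(e)}` for each
edge `e` adjacent to `v`. -/
def IsLocalDeg (T : TreeDyn V) (dV : V → ℕ) (dE : V → V → ℕ) : Prop :=
  (∀ v w : V, dE v w = dE w v) ∧
  (∀ v : V, 0 < dV v) ∧
  (∀ ⦃v w : V⦄, T.G.Adj v w → 0 < dE v w) ∧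
  (∀ v : V, (∑ᶠ w ∈ T.G.neighborSet v, (dE v w - 1)) + 2 ≤ 2 * dV v) ∧
  (∀ ⦃v w : V⦄, T.G.Adj v w →
    dV v = ∑ᶠ w' ∈ {w' : V | T.G.Adj v w' ∧ T.F w' = T.F w}, dE v w')

/-- `x` and `y` are in the same grand orbit if `F^[n] x = F^[m] y` for some `n, m > 0`. -/
def GrandOrbit (T : TreeDyn V) (x y : V) : Prop :=
  ∃ n m : ℕ, 0 < n ∧ 0 < m ∧ T.F^[n] x = T.F^[m] y

end TreeDyn

/-- The natural topology on the space of ends of a graph: the subspace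
topology induced from the product of the (discrete) spaces of components
of complements of finite sets. -/
def endTop {V : Type} (G : SimpleGraph V) : TopologicalSpace G.end :=
  TopologicalSpace.induced Subtype.val
    (⨅ K : (Finset V)ᵒᵖ, TopologicalSpace.induced (fun f => f K) ⊥)

/-- An end is isolated if it is an isolated point of the space of ends. -/
def IsIsolatedEnd {V : Type} (G : SimpleGraph V) (e : G.end) : Prop :=
  @IsOpen G.end (endTop G) {e}

namespace TreeDyn

variable {V : Type}

/-- `T` is polynomial-like with distinguished end `infty`:
(II) a local degree function exists, (I) `infty` is the unique isolated end,
(III) no vertex has valence one, and (IV) the grand orbit of every vertex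
contains a vertex of valence at least three. -/
def IsPolyLike (T : TreeDyn V) (infty : T.G.end) : Prop :=
  (∃ dV dE, T.IsLocalDeg dV dE) ∧
  IsIsolatedEnd T.G infty ∧
  (∀ e : T.G.end, IsIsolatedEnd T.G e → e = infty) ∧
  (∀ v : V, (T.G.neighborSet v).ncard ≠ 1) ∧
  (∀ v : V, ∃ w : V, T.GrandOrbit v w ∧ 3 ≤ (T.G.neighborSet w).ncard)

/-- The vertex `x` lies below the vertex `v` (the path from `x` to the
end `infty` passes through `v`): either `x = v`, or `x` and `infty`
determine different components of the complement of `{v}`. -/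
def Below (T : TreeDyn V) (infty : T.G.end) (v x : V) : Prop :=
  x = v ∨ ∃ h : x ∉ (({v} : Finset V) : Set V),
    T.G.componentComplMk h ≠ infty.val (op ({v} : Finset V))

/-- The end `p` lies below the vertex `v` (the path from `p` to `infty`
passes through `v`). -/
def EndBelow (T : TreeDyn V) (infty : T.G.end) (v : V) (p : T.G.end) : Prop :=
  p.val (op ({v} : Finset V)) ≠ infty.val (op ({v} : Finset V))

/-- `v₀` is the base of the tree: the vertex of valence ≥ 3 closest to
`infty`, i.e. every vertex of valence ≥ 3 lies below it. -/
def IsBase (T : TreeDyn V) (infty : T.G.end) (v₀ : V) : Prop :=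
  3 ≤ (T.G.neighborSet v₀).ncard ∧
  ∀ w : V, 3 ≤ (T.G.neighborSet w).ncard → T.Below infty v₀ w

open Classical in
/-- The combinatorial height relative to the base `v₀`: `|h v|` is the
graph distance to `v₀`, with `h v ≥ 0` exactly when `v` lies on the ray
from `v₀` to `infty` (i.e. `v₀` lies below `v`). -/
noncomputable def height (T : TreeDyn V) (infty : T.G.end) (v₀ : V) (v : V) : ℤ :=
  if T.Below infty v v₀ then (T.G.dist v₀ v : ℤ) else -(T.G.dist v₀ v : ℤ)

/-- `Dg` is the global degree of `T.F`: for every edge `{v,w}`, the sum of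
the degrees of the edges mapping onto it equals `Dg`. -/
def IsGlobalDeg (T : TreeDyn V) (dE : V → V → ℕ) (Dg : ℕ) : Prop :=
  ∀ ⦃v w : V⦄, T.G.Adj v w →
    Dg = ∑ᶠ a ∈ {a : V | T.F a = v}, ∑ᶠ b ∈ {b : V | T.G.Adj a b ∧ T.F b = w}, dE a b

/-- The critical multiplicity of a vertex. -/
noncomputable def multV (T : TreeDyn V) (dV : V → ℕ) (dE : V → V → ℕ) (v : V) : ℕ :=
  2 * dV v - 2 - ∑ᶠ w ∈ T.G.neighborSet v, (dE v w - 1)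

/-- The critical multiplicity of an end `p ≠ infty`: the limiting
(= minimal) value of `dV` along the path from `infty` to `p`, minus one. -/
noncomputable def multEnd (T : TreeDyn V) (infty : T.G.end) (dV : V → ℕ) (p : T.G.end) : ℕ :=
  sInf {d : ℕ | ∃ v : V, T.EndBelow infty v p ∧ dV v = d} - 1

/-- `μ` is the mass function: `μ v = 1` for `h(v) ≥ 0` and
`μ(F v) = (deg F / deg v) · μ v`. -/
def IsMass (T : TreeDyn V) (infty : T.G.end) (v₀ : V) (dV : V → ℕ) (Dg : ℕ)
    (μ : V → ℚ) : Prop :=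
  (∀ v : V, 0 ≤ T.height infty v₀ v → μ v = 1) ∧
  (∀ v : V, μ (T.F v) = ((Dg : ℚ) / (dV v : ℚ)) * μ v)

end TreeDyn

namespace SimpleGraph

variable {V : Type} {G : SimpleGraph V}

/-- The vertex `x` lies in the component of the complement of `v` that contains the end `e`. -/
def EndSide (e : G.end) (v x : V) : Prop :=
  ∃ h : x ∉ (({v} : Finset V) : Set V), G.componentComplMk h = e.val (op ({v} : Finset V))

theorem reachable_induce_compl_iff {K : Set V} {x y : V} (hx : x ∉ K) (hy : y ∉ K) :
    G.componentComplMk hx = G.componentComplMk hy ↔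
      ∃ p : G.Walk x y, ∀ z ∈ p.support, z ∉ K := by
  rw [ConnectedComponent.eq]
  constructor
  · rintro ⟨p⟩
    refine ⟨p.map (Embedding.induce Kᶜ).toHom, fun z hz => ?_⟩
    obtain ⟨a, -, rfl⟩ := List.mem_map.1 ((Walk.support_map _ p) ▸ hz)
    exact a.2
  · rintro ⟨p, hp⟩
    exact ⟨p.induce Kᶜ hp⟩

theorem EndSide.ne {e : G.end} {v x : V} (h : EndSide e v x) : x ≠ v := by
  obtain ⟨h, -⟩ := h
  simpa using h

theorem EndSide.iff_exists_walk {e : G.end} {v x y : V} (h : EndSide e v x) :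
    EndSide e v y ↔ ∃ p : G.Walk x y, v ∉ p.support := by
  obtain ⟨hx, hxe⟩ := h
  constructor
  · rintro ⟨hy, hye⟩
    obtain ⟨p, hp⟩ := (reachable_induce_compl_iff hx hy).1 (hxe.trans hye.symm)
    exact ⟨p, fun hv => hp v hv (by simp)⟩
  · rintro ⟨p, hp⟩
    have hp' : ∀ z ∈ p.support, z ∉ (({v} : Finset V) : Set V) := by
      rintro z hz hzv
      simp only [Finset.coe_singleton, Set.mem_singleton_iff] at hzv
      exact hp (hzv ▸ hz)
    have hy := hp' y p.end_mem_support
    exact ⟨hy, ((reachable_induce_compl_iff hx hy).2 ⟨p, hp'⟩).symm.trans hxe⟩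

theorem exists_endSide_of_finset (e : G.end) (K : Finset V) :
    ∃ x ∉ K, ∀ v ∈ K, EndSide e v x := by
  obtain ⟨x, hx, hxe⟩ := ComponentCompl.exists_eq_mk (e.val (op K))
  refine ⟨x, hx, fun v hv => ⟨?_, ?_⟩⟩
  · simp only [Finset.coe_singleton, Set.mem_singleton_iff]
    rintro rfl
    exact hx hv
  · exact (end_hom_mk_of_mk G e.2 (CategoryTheory.opHomOfLE (Finset.singleton_subset_iff.2 hv))
      hx hxe.symm).symm

theorem exists_adj_endSide (hG : G.Connected) (e : G.end) (v : V) :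
    ∃ w, G.Adj v w ∧ EndSide e v w := by
  obtain ⟨⟨w, k⟩, hw, hk, hwk⟩ := ComponentCompl.exists_adj_boundary_pair hG.preconnected
    (K := (({v} : Finset V) : Set V)) (by simp) (e.val (op ({v} : Finset V)))
  simp only [Finset.coe_singleton, Set.mem_singleton_iff] at hk
  subst hk
  exact ⟨w, hwk.symm, hw⟩

/-- If every walk from `x` to `y` passes through `v`, then `v` lies on a geodesic. -/
theorem Connected.dist_add_dist_le_of_forall_mem_support (hG : G.Connected) {v x y : V}
    (h : ∀ p : G.Walk x y, v ∈ p.support) : G.dist x v + G.dist v y ≤ G.dist x y := by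
  classical
  obtain ⟨p, hp⟩ := hG.exists_walk_length_eq_dist x y
  have h1 := dist_le (p.takeUntil v (h p))
  have h2 := dist_le (p.dropUntil v (h p))
  have h3 := congrArg Walk.length (p.take_spec (h p))
  rw [Walk.length_append] at h3
  omega

theorem Connected.exists_adj_dist_lt (hG : G.Connected) {x w : V} (h : x ≠ w) :
    ∃ y, G.Adj w y ∧ G.dist x y < G.dist x w := by
  obtain ⟨p, hp⟩ := hG.exists_walk_length_eq_dist w x
  cases p with
  | nil => exact absurd rfl h
  | @cons _ y _ hwy p =>
    have := dist_le p
    rw [Walk.length_cons] at hp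
    refine ⟨y, hwy, ?_⟩
    rw [dist_comm, dist_comm (u := x)]
    omega

/-- In a tree, a neighbour `w` of `v` is separated by `v` exactly from the vertices
that are closer to `v` than to `w`. -/
theorem IsTree.exists_walk_avoiding_iff_dist_lt (hG : G.IsTree) {v w x : V} (hvw : G.Adj v w) :
    (∃ p : G.Walk x w, v ∉ p.support) ↔ G.dist x w < G.dist x v := by
  classical
  constructor
  · rintro ⟨p, hp⟩
    by_contra hlt
    have hd := hG.dist_eq_dist_add_one_of_adj x hvw
    obtain ⟨q, hq⟩ := hG.connected.exists_walk_length_eq_dist x v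
    have hqp : (q.concat hvw).IsPath :=
      Walk.isPath_of_length_eq_dist _ (by rw [Walk.length_concat]; omega)
    have huniq : q.concat hvw = p.bypass := congrArg Subtype.val
      ((hG.isAcyclic.subsingleton_path x w).elim ⟨_, hqp⟩ ⟨_, p.bypass_isPath⟩)
    have hv : v ∈ (q.concat hvw).support :=
      Walk.support_subset_support_concat _ _ q.end_mem_support
    rw [huniq] at hv
    exact hp (p.support_bypass_subset_support hv)
  · intro hlt
    by_contra! h
    have := hG.connected.dist_add_dist_le_of_forall_mem_support h
    omega

theorem IsTree.eq_of_adj_of_dist_lt (hG : G.IsTree) {v a b u : V} (ha : G.Adj v a)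
    (hb : G.Adj v b) (hau : G.dist u a < G.dist u v) (hbu : G.dist u b < G.dist u v) :
    a = b := by
  obtain ⟨p, hp⟩ := (hG.exists_walk_avoiding_iff_dist_lt ha).2 hau
  obtain ⟨q, hq⟩ := (hG.exists_walk_avoiding_iff_dist_lt hb).2 hbu
  have h := (hG.exists_walk_avoiding_iff_dist_lt hb (x := a)).1
    ⟨p.reverse.append q, by simp [Walk.mem_support_append_iff, hp, hq]⟩
  rw [dist_eq_one_iff_adj.2 ha.symm, Nat.lt_one_iff] at h
  exact hG.connected.dist_eq_zero_iff.1 h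

theorem IsTree.endSide_iff_dist_lt (hG : G.IsTree) {e : G.end} {v w x : V} (hvw : G.Adj v w)
    (hw : EndSide e v w) : EndSide e v x ↔ G.dist x w < G.dist x v := by
  rw [hw.iff_exists_walk, ← hG.exists_walk_avoiding_iff_dist_lt hvw]
  constructor <;> rintro ⟨p, hp⟩ <;> exact ⟨p.reverse, by simpa using hp⟩

theorem IsTree.eq_of_not_endSide (hG : G.IsTree) (e : G.end) {v w : V} (h1 : ¬ EndSide e v w)
    (h2 : ¬ EndSide e w v) : v = w := by
  classical
  obtain ⟨x, -, hx⟩ := exists_endSide_of_finset e {v, w}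
  have hxv := hx v (by simp)
  have hxw := hx w (by simp)
  rw [hxv.iff_exists_walk] at h1
  rw [hxw.iff_exists_walk] at h2
  push Not at h1 h2
  have h3 := hG.connected.dist_add_dist_le_of_forall_mem_support h1
  have h4 := hG.connected.dist_add_dist_le_of_forall_mem_support h2
  exact hG.connected.dist_eq_zero_iff.1 (by omega)

/-- The neighbour of `v` in the direction of the end `e`. -/
noncomputable def IsTree.toEnd (hG : G.IsTree) (e : G.end) (v : V) : V :=
  (exists_adj_endSide hG.connected e v).choose

section toEnd

variable (hG : G.IsTree) (e : G.end)

theorem IsTree.adj_toEnd (v : V) : G.Adj v (hG.toEnd e v) :=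
  (exists_adj_endSide hG.connected e v).choose_spec.1

theorem IsTree.endSide_toEnd (v : V) : EndSide e v (hG.toEnd e v) :=
  (exists_adj_endSide hG.connected e v).choose_spec.2

theorem IsTree.endSide_iff (v x : V) :
    EndSide e v x ↔ G.dist x (hG.toEnd e v) < G.dist x v :=
  hG.endSide_iff_dist_lt (hG.adj_toEnd e v) (hG.endSide_toEnd e v)

theorem IsTree.eq_toEnd {v w : V} (hvw : G.Adj v w) (hw : EndSide e v w) :
    w = hG.toEnd e v := by
  have h := (hG.endSide_iff e v w).1 hw
  rw [dist_eq_one_iff_adj.2 hvw.symm, Nat.lt_one_iff] at h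
  exact hG.connected.dist_eq_zero_iff.1 h

theorem IsTree.toEnd_toEnd_ne (v : V) : hG.toEnd e (hG.toEnd e v) ≠ v := by
  classical
  intro h
  obtain ⟨x, -, hx⟩ := exists_endSide_of_finset e {v, hG.toEnd e v}
  have h1 := (hG.endSide_iff e _ x).1 (hx v (by simp))
  have h2 := (hG.endSide_iff e _ x).1 (hx (hG.toEnd e v) (by simp))
  rw [h] at h2
  omega

/-- Every edge of a tree points towards the end in one of its two directions. -/
theorem IsTree.toEnd_eq_or_of_adj {v w : V} (hvw : G.Adj v w) :
    hG.toEnd e v = w ∨ hG.toEnd e w = v := by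
  classical
  obtain ⟨x, -, hx⟩ := exists_endSide_of_finset e {v, w}
  have h1 := hx v (by simp)
  have h2 := hx w (by simp)
  rcases lt_or_gt_of_ne (hG.dist_ne_of_adj x hvw) with h | h
  · right
    exact hG.eq_of_adj_of_dist_lt (hG.adj_toEnd e w) hvw.symm ((hG.endSide_iff e w x).1 h2) h
  · left
    exact hG.eq_of_adj_of_dist_lt (hG.adj_toEnd e v) hvw ((hG.endSide_iff e v x).1 h1) h

theorem IsTree.dist_toEnd_of_not_endSide {v x : V} (h : ¬ EndSide e v x) :
    G.dist x (hG.toEnd e v) = G.dist x v + 1 := by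
  rw [hG.endSide_iff] at h
  have := hG.dist_eq_dist_add_one_of_adj x (hG.adj_toEnd e v)
  omega

theorem IsTree.dist_of_endSide {v x : V} (h : EndSide e v x) :
    G.dist x v = G.dist x (hG.toEnd e v) + 1 := by
  rw [hG.endSide_iff] at h
  have := hG.dist_eq_dist_add_one_of_adj x (hG.adj_toEnd e v)
  omega

theorem IsTree.not_endSide_toEnd {v x : V} (h : ¬ EndSide e v x) :
    ¬ EndSide e (hG.toEnd e v) x := by
  intro h'
  have h1 := hG.dist_toEnd_of_not_endSide e h
  exact hG.toEnd_toEnd_ne e v (hG.eq_of_adj_of_dist_lt (hG.adj_toEnd e _)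
    (hG.adj_toEnd e v).symm ((hG.endSide_iff e _ x).1 h') (by omega))

end toEnd

end SimpleGraph

namespace SimpleGraph

variable {V : Type} {G : SimpleGraph V} {r : ℕ → V}

theorem exists_forall_ge_notMem_of_injective (hr : Injective r) (K : Finset V) :
    ∃ n, ∀ k ≥ n, r k ∉ K := by
  obtain ⟨n, hn⟩ := (K.finite_toSet.preimage hr.injOn).bddAbove
  refine ⟨n + 1, fun k hk hkK => ?_⟩
  have : k ≤ n := hn hkK
  omega

theorem componentComplMk_eq_of_ray (hadj : ∀ i, G.Adj (r i) (r (i + 1))) {K : Set V} {m n : ℕ}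
    (hm : ∀ k ≥ m, r k ∉ K) (hn : ∀ k ≥ n, r k ∉ K) :
    G.componentComplMk (hm m le_rfl) = G.componentComplMk (hn n le_rfl) := by
  have key : ∀ (a : ℕ) (ha : ∀ k ≥ a, r k ∉ K) (b : ℕ) (hab : a ≤ b),
      G.componentComplMk (ha a le_rfl) = G.componentComplMk (ha b hab) := by
    intro a ha b hab
    induction b, hab using Nat.le_induction with
    | base => rfl
    | succ b hab ih =>
      exact ih.trans (G.componentComplMk_eq_of_adj (ha b hab) (ha (b + 1) (by omega)) (hadj b))
  rcases le_total m n with h | h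
  · exact key m hm n h
  · exact (key n hn m h).symm

/-- The end of a graph determined by an injective ray. -/
noncomputable def rayEnd (hr : Injective r) (hadj : ∀ i, G.Adj (r i) (r (i + 1))) : G.end :=
  ⟨fun K => G.componentComplMk (K := (K.unop : Set V))
      ((exists_forall_ge_notMem_of_injective hr K.unop).choose_spec _ le_rfl), by
    intro K L f
    have hsub : L.unop ⊆ K.unop := CategoryTheory.le_of_op_hom f
    exact componentComplMk_eq_of_ray (K := (L.unop : Set V)) hadj
      (fun k hk hkL => (exists_forall_ge_notMem_of_injective hr K.unop).choose_spec k hk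
        (hsub hkL))
      (exists_forall_ge_notMem_of_injective hr L.unop).choose_spec⟩

theorem rayEnd_val_eq (hr : Injective r) (hadj : ∀ i, G.Adj (r i) (r (i + 1))) (K : Finset V)
    {n : ℕ} (hn : ∀ k ≥ n, r k ∉ (K : Set V)) :
    (rayEnd hr hadj).val (op K) = G.componentComplMk (hn n le_rfl) :=
  componentComplMk_eq_of_ray (K := (K : Set V)) hadj
    (exists_forall_ge_notMem_of_injective hr K).choose_spec hn

theorem endSide_rayEnd (hr : Injective r) (hadj : ∀ i, G.Adj (r i) (r (i + 1))) (n : ℕ) :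
    EndSide (rayEnd hr hadj) (r n) (r (n + 1)) := by
  have hn : ∀ k ≥ n + 1, r k ∉ (({r n} : Finset V) : Set V) := by
    intro k hk hkn
    have := hr (by simpa using hkn : r k = r n)
    omega
  exact ⟨hn _ le_rfl, (rayEnd_val_eq hr hadj {r n} hn).symm⟩

theorem Walk.exists_eq_of_ray {I : ℕ}
    (hI : ∀ i ≥ I, ∀ w, G.Adj (r (i + 1)) w → w = r i ∨ w = r (i + 2)) {a b : V}
    (p : G.Walk a b) (hp : r I ∉ p.support) (ha : ∃ i > I, a = r i) : ∃ i > I, b = r i := by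
  induction p with
  | nil => exact ha
  | cons h p ih =>
    rw [Walk.support_cons, List.mem_cons, not_or] at hp
    obtain ⟨i, hi, rfl⟩ := ha
    obtain ⟨j, rfl⟩ : ∃ j, i = j + 1 := ⟨i - 1, by omega⟩
    refine ih hp.2 ?_
    rcases hI j (by omega) _ h with rfl | rfl
    · refine ⟨j, lt_of_le_of_ne (by omega) ?_, rfl⟩
      rintro rfl
      exact hp.2 p.start_mem_support
    · exact ⟨j + 2, by omega, rfl⟩

theorem isOpen_endTop_preimage (K : Finset V) (C : G.ComponentCompl (K : Set V)) :
    @IsOpen G.end (endTop G) {e | e.val (op K) = C} := by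
  have hle : endTop G ≤ TopologicalSpace.induced (fun e : G.end => e.val (op K)) ⊥ := by
    rw [endTop, induced_iInf]
    refine (iInf_le _ (op K)).trans ?_
    rw [induced_compose]
    rfl
  exact hle _ ⟨{C}, @isOpen_discrete _ ⊥ (@DiscreteTopology.mk _ ⊥ rfl) _, rfl⟩

/-- A ray that eventually does not branch determines an isolated end. -/
theorem isIsolatedEnd_rayEnd (hr : Injective r) (hadj : ∀ i, G.Adj (r i) (r (i + 1))) {I : ℕ}
    (hI : ∀ i ≥ I, ∀ w, G.Adj (r (i + 1)) w → w = r i ∨ w = r (i + 2)) :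
    IsIsolatedEnd G (rayEnd hr hadj) := by
  classical
  have hset : ({rayEnd hr hadj} : Set G.end) =
      {e | e.val (op {r I}) = (rayEnd hr hadj).val (op {r I})} := by
    ext e
    refine ⟨fun h => by rw [Set.mem_singleton_iff.1 h]; rfl, fun he => ?_⟩
    refine Subtype.ext (funext fun K => ?_)
    obtain ⟨n, hn⟩ := exists_forall_ge_notMem_of_injective hr K.unop
    let L : Finset V := K.unop ∪ (Finset.range (n + I + 1)).image r
    obtain ⟨x, hx, hxe⟩ := ComponentCompl.exists_eq_mk (e.val (op L))
    have hIL : {r I} ⊆ L := by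
      refine Finset.singleton_subset_iff.2 (Finset.mem_union_right _ ?_)
      exact Finset.mem_image_of_mem _ (Finset.mem_range.2 (by omega))
    have hxI : EndSide e (r I) x := ⟨fun h => hx (hIL h),
      (end_hom_mk_of_mk G e.2 (CategoryTheory.opHomOfLE hIL) hx hxe.symm).symm⟩
    have hrI : EndSide e (r I) (r (I + 1)) := by
      obtain ⟨h, h'⟩ := endSide_rayEnd hr hadj I
      exact ⟨h, h'.trans (Eq.symm he)⟩
    obtain ⟨p, hp⟩ := hrI.iff_exists_walk.1 hxI
    obtain ⟨j, hj, rfl⟩ := p.exists_eq_of_ray hI hp ⟨I + 1, by omega, rfl⟩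
    have hjn : n ≤ j := by
      by_contra hlt
      exact hx (Finset.mem_union_right _
        (Finset.mem_image_of_mem _ (Finset.mem_range.2 (by omega))))
    have hj' : ∀ k ≥ j, r k ∉ (K.unop : Set V) := fun k hk => hn k (by omega)
    exact (end_hom_mk_of_mk G e.2 (CategoryTheory.opHomOfLE (Finset.subset_union_left :
      K.unop ⊆ L)) hx hxe.symm).trans (rayEnd_val_eq hr hadj K.unop hj').symm
  rw [IsIsolatedEnd, hset]
  exact isOpen_endTop_preimage _ _

end SimpleGraph

namespace TreeDyn

variable {V : Type} (T : TreeDyn V)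

section Height

variable {T} {infty : T.G.end} {v₀ : V}

theorem below_iff_not_endSide {v x : V} : T.Below infty v x ↔ ¬ EndSide infty v x := by
  constructor
  · rintro (rfl | ⟨h, hne⟩) ⟨h', heq⟩
    · simp at h'
    · exact hne heq
  · intro h
    by_cases hx : x = v
    · exact Or.inl hx
    · exact Or.inr ⟨by simpa using hx, fun heq => h ⟨by simpa using hx, heq⟩⟩

theorem height_of_not_endSide {v : V} (h : ¬ EndSide infty v v₀) :
    T.height infty v₀ v = T.G.dist v₀ v :=
  if_pos (below_iff_not_endSide.2 h)

theorem height_of_endSide {v : V} (h : EndSide infty v v₀) :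
    T.height infty v₀ v = -T.G.dist v₀ v :=
  if_neg (fun h' => below_iff_not_endSide.1 h' h)

theorem height_eq_dist_of_nonneg {v : V} (h : 0 ≤ T.height infty v₀ v) :
    T.height infty v₀ v = T.G.dist v₀ v := by
  by_cases hv : EndSide infty v v₀
  · have := height_of_endSide hv
    omega
  · exact height_of_not_endSide hv

theorem eq_base_of_height_eq_zero {v : V} (h : T.height infty v₀ v = 0) : v = v₀ := by
  have := height_eq_dist_of_nonneg h.ge
  exact (T.isTree.connected.dist_eq_zero_iff.1 (by omega)).symm

theorem height_base : T.height infty v₀ v₀ = 0 := by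
  rw [height_of_not_endSide fun h => h.ne rfl, dist_self, Nat.cast_zero]

theorem IsBase.height_nonpos (hbase : T.IsBase infty v₀) {w : V}
    (hw : 3 ≤ (T.G.neighborSet w).ncard) : T.height infty v₀ w ≤ 0 := by
  by_cases h : EndSide infty w v₀
  · rw [height_of_endSide h]
    omega
  · rw [T.isTree.eq_of_not_endSide infty h (below_iff_not_endSide.1 (hbase.2 w hw)),
      height_base]

theorem three_le_ncard_neighborSet {v a b c : V} (ha : T.G.Adj v a) (hb : T.G.Adj v b)
    (hc : T.G.Adj v c) (hab : a ≠ b) (hac : a ≠ c) (hbc : b ≠ c) :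
    3 ≤ (T.G.neighborSet v).ncard := by
  rw [← Set.ncard_eq_three.2 ⟨a, b, c, hab, hac, hbc, rfl⟩]
  refine Set.ncard_le_ncard ?_ (T.locFin v)
  rintro x (rfl | rfl | rfl) <;> assumption

theorem IsBase.height_toEnd (hbase : T.IsBase infty v₀) (v : V) :
    T.height infty v₀ (T.isTree.toEnd infty v) = T.height infty v₀ v + 1 := by
  by_cases h : EndSide infty v v₀
  · have hd := T.isTree.dist_of_endSide infty h
    rw [height_of_endSide h, hd]
    by_cases h' : EndSide infty (T.isTree.toEnd infty v) v₀
    · rw [height_of_endSide h']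
      push_cast
      ring
    · by_cases hw : v₀ = T.isTree.toEnd infty v
      · rw [← hw, height_base, dist_self]
        simp
      · exfalso
        obtain ⟨y, hwy, hyd⟩ := T.isTree.connected.exists_adj_dist_lt hw
        have hup := T.isTree.dist_toEnd_of_not_endSide infty h'
        have h3 : 3 ≤ (T.G.neighborSet (T.isTree.toEnd infty v)).ncard :=
          three_le_ncard_neighborSet (T.isTree.adj_toEnd infty _)
            (T.isTree.adj_toEnd infty v).symm hwy (T.isTree.toEnd_toEnd_ne infty v)
            (by rintro rfl; omega) (by rintro rfl; omega)
        exact hw (T.isTree.eq_of_not_endSide infty h'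
          (below_iff_not_endSide.1 (hbase.2 _ h3))).symm
  · rw [height_of_not_endSide h, height_of_not_endSide (T.isTree.not_endSide_toEnd infty h),
      T.isTree.dist_toEnd_of_not_endSide infty h]
    push_cast
    rfl

theorem IsBase.eq_or_eq_toEnd_of_adj (hbase : T.IsBase infty v₀) {x a : V}
    (hx : 0 ≤ T.height infty v₀ x) (ha : T.G.Adj (T.isTree.toEnd infty x) a) :
    a = x ∨ a = T.isTree.toEnd infty (T.isTree.toEnd infty x) := by
  by_contra! hne
  have h3 := hbase.height_nonpos (three_le_ncard_neighborSet ha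
    (T.isTree.adj_toEnd infty x).symm (T.isTree.adj_toEnd infty _) hne.1 hne.2
    (T.isTree.toEnd_toEnd_ne infty x).symm)
  rw [hbase.height_toEnd] at h3
  omega

end Height

theorem exists_preimage_dist_le_length {a y : V} (p : T.G.Walk a y) {x : V} (hx : T.F x = a) :
    ∃ u, T.F u = y ∧ T.G.dist x u ≤ p.length := by
  induction p generalizing x with
  | nil => exact ⟨x, hx, by simp⟩
  | cons h p ih =>
    subst hx
    obtain ⟨w, hxw, hw⟩ := T.edgeSurj h
    obtain ⟨u, hu, hd⟩ := ih hw
    refine ⟨u, hu, ?_⟩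
    have := T.isTree.connected.dist_triangle (u := x) (v := w) (w := u)
    rw [dist_eq_one_iff_adj.2 hxw] at this
    rw [Walk.length_cons]
    omega

theorem exists_preimage_dist_le (x y : V) :
    ∃ u, T.F u = y ∧ T.G.dist x u ≤ T.G.dist (T.F x) y := by
  obtain ⟨p, hp⟩ := T.isTree.connected.exists_walk_length_eq_dist (T.F x) y
  rw [← hp]
  exact T.exists_preimage_dist_le_length p rfl

theorem dist_image_le (x y : V) : T.G.dist (T.F x) (T.F y) ≤ T.G.dist x y := by
  obtain ⟨p, hp⟩ := T.isTree.connected.exists_walk_length_eq_dist x y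
  rw [← hp]
  simpa using dist_le (p.map ⟨T.F, fun h => T.adjMap h⟩ : T.G.Walk (T.F x) (T.F y))

theorem exists_lifted_ray (infty : T.G.end) {v w : V} (hvw : T.G.Adj v w)
    (hw : T.F w = T.isTree.toEnd infty (T.F v)) :
    ∃ r : ℕ → V, r 0 = v ∧ r 1 = w ∧ (∀ i, T.G.Adj (r i) (r (i + 1))) ∧
      ∀ i, T.F (r (i + 1)) = T.isTree.toEnd infty (T.F (r i)) := by
  choose s hs hsF using fun x => T.edgeSurj (T.isTree.adj_toEnd infty (T.F x))
  refine ⟨fun i => Nat.casesOn i v fun n => s^[n] w, rfl, rfl, ?_, ?_⟩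
  · rintro (_ | i)
    · exact hvw
    · simp only [iterate_succ_apply']
      exact hs _
  · rintro (_ | i)
    · exact hw
    · simp only [iterate_succ_apply']
      exact hsF _

/-- Along a ray `r` whose image escapes from `v₀`, all but finitely many vertices have a
unique edge that is mapped back towards `v₀`. -/
theorem exists_forall_ge_eq_of_image_eq {v₀ : V} {r : ℕ → V}
    (hadj : ∀ i, T.G.Adj (r i) (r (i + 1))) {K : ℕ}
    (hd : ∀ i ≥ K, T.G.dist (T.F (r (i + 1))) v₀ = T.G.dist (T.F (r i)) v₀ + 1) :
    ∃ M ≥ K, ∀ i ≥ M, ∀ a, T.G.Adj (r (i + 1)) a → T.F a = T.F (r i) → a = r i := by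
  let B : Set ℕ := {i | K ≤ i ∧ ∃ a, T.G.Adj (r (i + 1)) a ∧ T.F a = T.F (r i) ∧ a ≠ r i}
  have hB : ∀ i ∈ B, ∃ a u, T.G.Adj (r (i + 1)) a ∧ a ≠ r i ∧ T.F u = v₀ ∧
      T.G.dist a u ≤ T.G.dist (T.F (r i)) v₀ := by
    rintro i ⟨-, a, ha, hF, hne⟩
    obtain ⟨u, hu, hdu⟩ := T.exists_preimage_dist_le a v₀
    exact ⟨a, u, ha, hne, hu, hF ▸ hdu⟩
  have : Nonempty V := ⟨v₀⟩
  choose! a u ha hne hu hdu using hB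
  have hclose : ∀ i ∈ B, ∀ j > i, T.G.dist (r j) (u i) ≤ T.G.dist (T.F (r j)) v₀ := by
    intro i hi j hj
    induction j, hj using Nat.le_induction with
    | base =>
      have h1 := T.isTree.connected.dist_triangle (u := r (i + 1)) (v := a i) (w := u i)
      rw [dist_eq_one_iff_adj.2 (ha i hi)] at h1
      have h2 := hdu i hi
      have h3 := hd i hi.1
      simp only [Nat.succ_eq_add_one] at *
      omega
    | succ j hj ih =>
      have h1 := T.isTree.connected.dist_triangle (u := r (j + 1)) (v := r j) (w := u i)
      rw [dist_eq_one_iff_adj.2 (hadj j).symm] at h1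
      have h3 := hd j (by have := hi.1; omega)
      omega
  have hlt : ∀ i ∈ B, ∀ j ∈ B, i < j → u i ≠ u j := by
    intro i hi j hj hij heq
    have h1 := hclose i hi j hij
    have h2 := hdu j hj
    have h3 := T.dist_image_le (r (j + 1)) (u j)
    rw [hu j hj, hd j hj.1] at h3
    rw [heq] at h1
    refine hne j hj (T.isTree.eq_of_adj_of_dist_lt (u := u j) (ha j hj) (hadj j).symm ?_ ?_)
    · rw [dist_comm, dist_comm (u := u j)]
      omega
    · rw [dist_comm, dist_comm (u := u j)]
      omega
  have hinj : Set.InjOn u B := by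
    intro i hi j hj heq
    rcases lt_trichotomy i j with h | h | h
    · exact absurd heq (hlt i hi j hj h)
    · exact h
    · exact absurd heq.symm (hlt j hj i hi h)
  have hfin : B.Finite := Set.Finite.of_injOn (fun i hi => hu i hi) hinj (T.finFibers v₀)
  obtain ⟨n, hn⟩ := hfin.bddAbove
  refine ⟨n + 1 + K, by omega, fun i hi a ha hF => ?_⟩
  by_contra hne
  have : i ≤ n := hn ⟨by omega, a, ha, hF, hne⟩
  omega

/-- Along a ray whose vertices have a unique edge mapped to the image of the previous one,
the local degrees decrease, so that eventually the ray is also determined going forward. -/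
theorem IsLocalDeg.exists_forall_ge_eq_of_image_eq {T : TreeDyn V} {dV : V → ℕ} {dE : V → V → ℕ}
    (hdeg : T.IsLocalDeg dV dE) {r : ℕ → V} (hadj : ∀ i, T.G.Adj (r i) (r (i + 1))) {M : ℕ}
    (hM : ∀ i ≥ M, ∀ a, T.G.Adj (r (i + 1)) a → T.F a = T.F (r i) → a = r i) :
    ∃ I ≥ M, ∀ i ≥ I, ∀ a, T.G.Adj (r (i + 1)) a → T.F a = T.F (r (i + 2)) → a = r (i + 2) := by
  obtain ⟨hsymm, -, hpos, -, hsum⟩ := hdeg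
  have hback : ∀ i ≥ M, dV (r (i + 1)) = dE (r (i + 1)) (r i) := by
    intro i hi
    rw [hsum (hadj i).symm, show {a | T.G.Adj (r (i + 1)) a ∧ T.F a = T.F (r i)} = {r i} from
      Set.ext fun a => ⟨fun h => hM i hi a h.1 h.2, by rintro rfl; exact ⟨(hadj i).symm, rfl⟩⟩,
      finsum_mem_singleton]
  have hle : ∀ i ≥ M, ∀ s : Finset V,
      (∀ a ∈ s, T.G.Adj (r (i + 1)) a ∧ T.F a = T.F (r (i + 2))) →
      ∑ a ∈ s, dE (r (i + 1)) a ≤ dV (r (i + 1)) := by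
    intro i hi s hs
    have hfin : {a | T.G.Adj (r (i + 1)) a ∧ T.F a = T.F (r (i + 2))}.Finite :=
      (T.locFin (r (i + 1))).subset fun a ha => ha.1
    rw [hsum (hadj (i + 1)), finsum_mem_eq_finite_toFinset_sum _ hfin]
    exact Finset.sum_le_sum_of_subset fun a ha => hfin.mem_toFinset.2 (hs a ha)
  have hanti : Antitone fun n => dV (r (M + n + 1)) := by
    refine antitone_nat_of_succ_le fun n => ?_
    have h1 := hle (M + n) (by omega) {r (M + n + 2)} (by
      simpa using hadj (M + n + 1))
    rw [Finset.sum_singleton, hsymm, ← hback (M + n + 1) (by omega)] at h1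
    exact h1
  obtain ⟨m, hm⟩ : ∃ m, ∀ n, dV (r (M + m + 1)) ≤ dV (r (M + n + 1)) :=
    ⟨argmin fun n => dV (r (M + n + 1)), fun n => argmin_le (fun n => dV (r (M + n + 1))) n⟩
  refine ⟨M + m, by omega, fun i hi a ha hF => ?_⟩
  classical
  by_contra hne
  obtain ⟨n, rfl⟩ := Nat.exists_eq_add_of_le hi
  have h1 := hle (M + m + n) (by omega) {a, r (M + m + n + 2)} (by
    intro b hb
    rcases Finset.mem_insert.1 hb with rfl | hb
    · exact ⟨ha, hF⟩
    · rw [Finset.mem_singleton.1 hb]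
      exact ⟨hadj _, rfl⟩)
  rw [Finset.sum_pair hne, hsymm _ (r _), ← hback (M + m + n + 1) (by omega)] at h1
  have h2 := hm (m + n + 1)
  have h3 := hanti (show m ≤ m + n by omega)
  have h4 := hpos ha
  simp only [← add_assoc] at h1 h2 h3 h4
  omega

theorem IsPolyLike.eq_toEnd_of_image_eq {T : TreeDyn V} {infty : T.G.end}
    (hpl : T.IsPolyLike infty) {v₀ : V} (hbase : T.IsBase infty v₀) {v w : V}
    (hvw : T.G.Adj v w) (hw : T.F w = T.isTree.toEnd infty (T.F v)) :
    w = T.isTree.toEnd infty v := by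
  obtain ⟨⟨dV, dE, hdeg⟩, -, huniq, -, -⟩ := hpl
  obtain ⟨r, rfl, rfl, hadj, hF⟩ := T.exists_lifted_ray infty hvw hw
  have hheight : ∀ i, T.height infty v₀ (T.F (r i)) = T.height infty v₀ (T.F (r 0)) + i := by
    intro i
    induction i with
    | zero => simp
    | succ i ih =>
      rw [hF, hbase.height_toEnd, ih]
      push_cast
      ring
  have hr : Injective r := by
    intro i j hij
    have h1 := hheight i
    have h2 := hheight j
    rw [hij] at h1
    omega
  have hnonneg : ∀ i ≥ (T.height infty v₀ (T.F (r 0))).natAbs,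
      0 ≤ T.height infty v₀ (T.F (r i)) := by
    intro i hi
    rw [hheight]
    omega
  obtain ⟨M, hMK, hM⟩ := T.exists_forall_ge_eq_of_image_eq (v₀ := v₀) hadj
    (K := (T.height infty v₀ (T.F (r 0))).natAbs) (by
      intro i hi
      have h1 := height_eq_dist_of_nonneg (hnonneg i hi)
      have h2 := height_eq_dist_of_nonneg (hnonneg (i + 1) (by omega))
      rw [hF, hbase.height_toEnd, ← hF] at h2
      rw [dist_comm, dist_comm (v := v₀)]
      omega)
  obtain ⟨I, hIM, hI⟩ := hdeg.exists_forall_ge_eq_of_image_eq hadj hM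
  have hiso := isIsolatedEnd_rayEnd hr hadj (I := I) (by
    intro i hi a ha
    have hFa := T.adjMap ha
    rw [hF] at hFa
    rcases hbase.eq_or_eq_toEnd_of_adj (hnonneg i (by omega)) hFa with h | h
    · exact Or.inl (hM i (by omega) a ha h)
    · exact Or.inr (hI i hi a ha (by rw [h, hF (i + 1), hF i])))
  refine T.isTree.eq_toEnd infty hvw ?_
  rw [← huniq _ hiso]
  exact endSide_rayEnd hr hadj 0

theorem IsPolyLike.image_toEnd {T : TreeDyn V} {infty : T.G.end}
    (hpl : T.IsPolyLike infty) {v₀ : V} (hbase : T.IsBase infty v₀) (v : V) :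
    T.F (T.isTree.toEnd infty v) = T.isTree.toEnd infty (T.F v) := by
  obtain ⟨w, hvw, hw⟩ := T.edgeSurj (T.isTree.adj_toEnd infty (T.F v))
  rw [← hpl.eq_toEnd_of_image_eq hbase hvw hw, hw]

theorem ncard_neighborSet_image_le (v : V) :
    (T.G.neighborSet (T.F v)).ncard ≤ (T.G.neighborSet v).ncard := by
  refine (Set.ncard_le_ncard (t := T.F '' T.G.neighborSet v) ?_
    ((T.locFin v).image _)).trans (Set.ncard_image_le (T.locFin v))
  intro w hw
  obtain ⟨x, hx, rfl⟩ := T.edgeSurj hw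
  exact ⟨x, hx, rfl⟩

end TreeDyn

/-- **The combinatorial height is translated by a constant.**
Let `F : T → T` be a polynomial-like branched covering of a simplicial tree,
with distinguished isolated end `infty` and base `v₀`.  Then there is an
integer `N(F) > 0` with `h(F v) = h(v) + N(F)` for every vertex `v`, where
`h` is the combinatorial height. -/
theorem height_of_image_eq_add_const
    {V : Type} (T : TreeDyn V) (infty : T.G.end)
    (hpl : T.IsPolyLike infty) (v₀ : V) (hbase : T.IsBase infty v₀) :
    ∃ N : ℕ, 0 < N ∧ ∀ v : V,
      T.height infty v₀ (T.F v) = T.height infty v₀ v + (N : ℤ) := by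
  have hconst : ∀ v, T.height infty v₀ (T.F v) - T.height infty v₀ v =
      T.height infty v₀ (T.F v₀) - T.height infty v₀ v₀ := by
    have hup : ∀ v, T.height infty v₀ (T.F (T.isTree.toEnd infty v)) -
        T.height infty v₀ (T.isTree.toEnd infty v) =
        T.height infty v₀ (T.F v) - T.height infty v₀ v := by
      intro v
      rw [hpl.image_toEnd hbase, hbase.height_toEnd, hbase.height_toEnd]
      ring
    intro v
    obtain ⟨p⟩ := T.isTree.connected.preconnected v v₀
    induction p with
    | nil => rfl
    | cons h p ih =>
      rw [← ih hbase hup]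
      rcases T.isTree.toEnd_eq_or_of_adj infty h with h | h
      · rw [← h, hup]
      · rw [← h, hup]
  rw [TreeDyn.height_base, sub_zero] at hconst
  generalize T.height infty v₀ (T.F v₀) = N at hconst
  have hray : ∀ n : ℕ, T.height infty v₀ ((T.isTree.toEnd infty)^[n] v₀) = n := by
    intro n
    induction n with
    | zero => exact TreeDyn.height_base
    | succ n ih =>
      rw [iterate_succ_apply', hbase.height_toEnd, ih]
      push_cast
      rfl
  have hiter : ∀ (n : ℕ) v, T.height infty v₀ (T.F^[n] v) = T.height infty v₀ v + n * N := by
    intro n v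
    induction n with
    | zero => simp
    | succ n ih =>
      have := hconst (T.F^[n] v)
      rw [iterate_succ_apply']
      push_cast
      linarith
  have hN : 0 < N := by
    rcases lt_trichotomy N 0 with h | h | h
    · exfalso
      have h1 := hray N.natAbs
      have h2 := hconst ((T.isTree.toEnd infty)^[N.natAbs] v₀)
      have h3 := TreeDyn.eq_base_of_height_eq_zero (T := T) (infty := infty) (v₀ := v₀)
        (v := T.F ((T.isTree.toEnd infty)^[N.natAbs] v₀)) (by omega)
      have h4 := T.ncard_neighborSet_image_le ((T.isTree.toEnd infty)^[N.natAbs] v₀)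
      rw [h3] at h4
      have h5 := hbase.height_nonpos (hbase.1.trans h4)
      omega
    · exfalso
      obtain ⟨w, ⟨n, m, -, -, hnm⟩, hw⟩ := hpl.2.2.2.2 ((T.isTree.toEnd infty)^[1] v₀)
      have h1 := congrArg (T.height infty v₀) hnm
      rw [hiter, hiter, hray, h] at h1
      have h2 := hbase.height_nonpos hw
      simp only [mul_zero, add_zero, Nat.cast_one] at h1
      omega
    · exact h
  refine ⟨N.toNat, by omega, fun v => ?_⟩
  have := hconst v
  omega
end

section
/- Let F : T → T be a polynomial-like branched covering of a simplicial tree with local degree function deg. Then for every vertex v, the upper edge e of v satisfies deg(e) = deg(v); and if h(v) ≥ 0 (v lies on the ray from the base to ∞), then deg(v) = deg(F), the global degree. -/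
open SimpleGraph Function Opposite

namespace SimpleGraph

variable {V : Type}

/-- The component of the complement of `K` determined by the end `e`. -/
def endComponent {G : SimpleGraph V} (e : G.end) (K : Finset V) : G.ComponentCompl (K : Set V) :=
  e.val (op K)

theorem mem_endComponent_anti {G : SimpleGraph V} (e : G.end) {K L : Finset V} (h : K ⊆ L) {z : V}
    (hz : z ∈ endComponent e L) : z ∈ endComponent e K := by
  obtain ⟨hzL, hz⟩ := hz
  exact ⟨fun hK => hzL (h hK),
    (end_hom_mk_of_mk G e.2 (CategoryTheory.opHomOfLE h) hzL hz.symm).symm⟩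

theorem exists_mem_endComponent {G : SimpleGraph V} (e : G.end) (K : Finset V) :
    ∃ z, z ∈ endComponent e K :=
  (endComponent e K).nonempty

/-- Two vertices of the same component of the complement of `K` are joined by a path
avoiding `K`. -/
theorem ComponentCompl.exists_isPath {G : SimpleGraph V} {K : Set V} {C : G.ComponentCompl K}
    {x y : V} (hx : x ∈ C) (hy : y ∈ C) :
    ∃ p : G.Walk x y, p.IsPath ∧ ∀ v ∈ K, v ∉ p.support := by
  classical
  obtain ⟨hxK, hx⟩ := hx
  obtain ⟨hyK, hy⟩ := hy
  obtain ⟨p⟩ := ConnectedComponent.exact (hx.trans hy.symm)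
  let q : G.Walk x y := p.map (Embedding.induce Kᶜ).toHom
  refine ⟨q.bypass, q.bypass_isPath, fun v hv hmem => ?_⟩
  have h := q.support_bypass_subset_support hmem
  rw [show q.support = _ from Walk.support_map _ p, List.mem_map] at h
  obtain ⟨a, -, rfl⟩ := h
  exact a.2 hv

theorem ComponentCompl.mem_of_walk {G : SimpleGraph V} {K : Set V} {x y : V} (p : G.Walk x y)
    (hp : ∀ v ∈ K, v ∉ p.support) {C : G.ComponentCompl K} (hx : x ∈ C) : y ∈ C := by
  induction p with
  | nil => exact hx
  | cons h p ih =>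
    refine ih (fun v hv hmem => hp v hv (by simp [hmem])) ?_
    exact ComponentCompl.mem_of_adj _ _ hx (fun hK => hp _ hK (by simp)) h

theorem IsTree.length_eq_dist {G : SimpleGraph V} (hG : G.IsTree) {x y : V} {p : G.Walk x y}
    (hp : p.IsPath) : p.length = G.dist x y := by
  obtain ⟨q, hq, hl⟩ := hG.connected.exists_path_of_dist x y
  rw [← hl, (hG.existsUnique_path x y).unique hp hq]

end SimpleGraph

namespace TreeDyn

variable {V : Type}

theorem not_below_iff (T : TreeDyn V) (infty : T.G.end) {v x : V} :
    ¬ T.Below infty v x ↔ x ∈ endComponent infty {v} := by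
  unfold Below
  constructor
  · intro h
    push Not at h
    have hx : x ∉ (({v} : Finset V) : Set V) := by simpa using h.1
    exact ⟨hx, h.2 hx⟩
  · rintro ⟨hx, h⟩ (h' | ⟨_, h'⟩)
    · exact hx (by simp [h'])
    · exact h' h

theorem exists_adj_mem_endComponent (T : TreeDyn V) (infty : T.G.end) (v : V) :
    ∃ w, T.G.Adj v w ∧ w ∈ endComponent infty {v} := by
  obtain ⟨⟨w, k⟩, hw, hk, hadj⟩ := (endComponent infty {v}).exists_adj_boundary_pair
    T.isTree.connected.preconnected (by simp)
  obtain rfl : k = v := by simpa using hk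
  exact ⟨w, hadj.symm, hw⟩

/-- The neighbour of `v` in the direction of the end `infty`. -/
noncomputable def up (T : TreeDyn V) (infty : T.G.end) (v : V) : V :=
  (T.exists_adj_mem_endComponent infty v).choose

theorem adj_up (T : TreeDyn V) (infty : T.G.end) (v : V) : T.G.Adj v (T.up infty v) :=
  (T.exists_adj_mem_endComponent infty v).choose_spec.1

theorem up_mem (T : TreeDyn V) (infty : T.G.end) (v : V) :
    T.up infty v ∈ endComponent infty {v} :=
  (T.exists_adj_mem_endComponent infty v).choose_spec.2

/-- In a tree, distinct neighbours of `v` lie in distinct components of the complement of `v`. -/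
theorem eq_of_adj_of_mem_component (T : TreeDyn V) {v w w' : V}
    {C : T.G.ComponentCompl (({v} : Finset V) : Set V)}
    (hw : T.G.Adj v w) (hw' : T.G.Adj v w') (hC : w ∈ C) (hC' : w' ∈ C) : w = w' := by
  obtain ⟨p, hp, hv⟩ := ComponentCompl.exists_isPath hC hC'
  have h := (T.isTree.existsUnique_path v w').unique
    (hp.cons (h := hw) (hv v (by simp))) (Walk.IsPath.of_adj hw')
  have hl : p.length + 1 = 1 := by simpa using congrArg Walk.length h
  exact Walk.eq_of_length_eq_zero (p := p) (by omega)

theorem eq_up (T : TreeDyn V) (infty : T.G.end) {v w : V} (hw : T.G.Adj v w)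
    (hC : w ∈ endComponent infty {v}) : w = T.up infty v :=
  T.eq_of_adj_of_mem_component hw (T.adj_up infty v) hC (T.up_mem infty v)

theorem dist_up_lt (T : TreeDyn V) (infty : T.G.end) {v z : V}
    (hz : z ∈ endComponent infty {v}) :
    T.G.dist (T.up infty v) z < T.G.dist v z := by
  obtain ⟨p, hp, hv⟩ := ComponentCompl.exists_isPath (T.up_mem infty v) hz
  have h := T.isTree.length_eq_dist (hp.cons (h := T.adj_up infty v) (hv v (by simp)))
  have := T.G.dist_le p
  rw [Walk.length_cons] at h
  omega

theorem iterate_up_ne (T : TreeDyn V) (infty : T.G.end) (x : V) {n : ℕ} (hn : 0 < n) :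
    (T.up infty)^[n] x ≠ x := by
  classical
  obtain ⟨z, hz⟩ := exists_mem_endComponent infty
    ((Finset.range n).image fun i => (T.up infty)^[i] x)
  have hlt : ∀ m ≤ n, T.G.dist ((T.up infty)^[m] x) z + m ≤ T.G.dist x z := by
    intro m
    induction m with
    | zero => simp
    | succ m ih =>
      intro hm
      have h := ih (by omega)
      have h' := T.dist_up_lt infty (v := (T.up infty)^[m] x) (mem_endComponent_anti infty (by
        simp only [Finset.singleton_subset_iff, Finset.mem_image, Finset.mem_range]
        exact ⟨m, by omega, rfl⟩) hz)
      rw [Function.iterate_succ_apply']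
      omega
  intro h
  have := hlt n le_rfl
  rw [h] at this
  omega

theorem up_up_ne (T : TreeDyn V) (infty : T.G.end) (x : V) :
    T.up infty (T.up infty x) ≠ x :=
  T.iterate_up_ne infty x (n := 2) (by norm_num)

theorem iterate_up_injective (T : TreeDyn V) (infty : T.G.end) (x : V) :
    Function.Injective fun n => (T.up infty)^[n] x := by
  intro m n h
  wlog hmn : m ≤ n generalizing m n
  · exact (this h.symm (by omega)).symm
  obtain ⟨k, rfl⟩ := Nat.exists_eq_add_of_le' hmn
  by_contra hne
  refine T.iterate_up_ne infty ((T.up infty)^[m] x) (n := k) (by omega) ?_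
  rw [← Function.iterate_add_apply]
  exact h.symm

/-- Of two adjacent vertices, one is the upper neighbour of the other. -/
theorem eq_up_or_up_eq (T : TreeDyn V) (infty : T.G.end) {v w : V} (h : T.G.Adj v w) :
    w = T.up infty v ∨ T.up infty w = v := by
  classical
  obtain ⟨z, hz⟩ := exists_mem_endComponent infty {v, w}
  have hzv := mem_endComponent_anti infty (K := {v}) (by simp) hz
  have hzw := mem_endComponent_anti infty (K := {w}) (by simp) hz
  obtain ⟨p, hp, -⟩ := T.isTree.existsUnique_path v z
  by_cases hw : w ∈ p.support
  · left
    cases p with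
    | nil => exact absurd (by simpa using hw) h.ne'
    | cons h' q =>
      have hv := ((Walk.cons_isPath_iff h' q).1 hp).2
      rw [Walk.support_cons, List.mem_cons] at hw
      have hwq := hw.resolve_left h.ne'
      refine T.eq_up infty h (ComponentCompl.mem_of_walk (q.dropUntil w hwq).reverse ?_ hzv)
      intro a ha hmem
      obtain rfl : a = v := by simpa using ha
      rw [Walk.support_reverse, List.mem_reverse] at hmem
      exact hv (q.support_dropUntil_subset_support hwq hmem)
  · right
    refine (T.eq_up infty h.symm (ComponentCompl.mem_of_walk p.reverse ?_ hzw)).symm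
    intro a ha hmem
    obtain rfl : a = w := by simpa using ha
    exact hw (by simpa using hmem)

theorem exists_iterate_up_eq (T : TreeDyn V) (infty : T.G.end) (x y : V) :
    ∃ i j, (T.up infty)^[i] x = (T.up infty)^[j] y := by
  obtain ⟨p⟩ := T.isTree.connected.preconnected x y
  induction p with
  | nil => exact ⟨0, 0, rfl⟩
  | @cons u v w h p ih =>
    obtain ⟨i, j, hij⟩ := ih
    rcases T.eq_up_or_up_eq infty h with hv | hv
    · exact ⟨i + 1, j, by rw [Function.iterate_succ_apply, ← hv, hij]⟩
    · refine ⟨i, j + 1, ?_⟩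
      rw [Function.iterate_succ_apply', ← hij, ← Function.iterate_succ_apply' (T.up infty),
        Function.iterate_succ_apply, hv]

theorem mem_of_iterate_up_ne (T : TreeDyn V) (infty : T.G.end) {v z : V}
    {C : T.G.ComponentCompl (({v} : Finset V) : Set V)}
    (h : ∀ s, (T.up infty)^[s] z ≠ v) (n : ℕ) : (T.up infty)^[n] z ∈ C ↔ z ∈ C := by
  induction n with
  | zero => rfl
  | succ n ih =>
    rw [← ih, Function.iterate_succ_apply']
    have hadj := T.adj_up infty ((T.up infty)^[n] z)
    have hn := h n
    have hn' := h (n + 1)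
    rw [Function.iterate_succ_apply'] at hn'
    exact ⟨fun hC => ComponentCompl.mem_of_adj _ _ hC (by simpa using hn) hadj.symm,
      fun hC => ComponentCompl.mem_of_adj _ _ hC (by simpa using hn') hadj⟩

theorem mem_endComponent_of_iterate_up_ne (T : TreeDyn V) (infty : T.G.end) {v z : V}
    (h : ∀ s, (T.up infty)^[s] z ≠ v) : z ∈ endComponent infty {v} := by
  obtain ⟨i, j, hij⟩ := T.exists_iterate_up_eq infty z v
  rw [← T.mem_of_iterate_up_ne infty h (i + 1), Function.iterate_succ_apply', hij,
    ← Function.iterate_succ_apply' (T.up infty), Function.iterate_succ_apply,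
    T.mem_of_iterate_up_ne infty]
  · exact T.up_mem infty v
  · intro s
    rw [← Function.iterate_succ_apply]
    exact T.iterate_up_ne infty v (by omega)

theorem exists_iterate_up_of_below (T : TreeDyn V) (infty : T.G.end) {v z : V}
    (h : T.Below infty v z) : ∃ s, (T.up infty)^[s] z = v := by
  by_contra! hne
  exact (T.not_below_iff infty).2 (T.mem_endComponent_of_iterate_up_ne infty hne) h

theorem ncard_neighborSet_iterate_up (T : TreeDyn V) (infty : T.G.end) {v₀ : V}
    (hbase : T.IsBase infty v₀) (k : ℕ) :
    (T.G.neighborSet ((T.up infty)^[k + 1] v₀)).ncard ≤ 2 := by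
  by_contra! h
  refine (T.not_below_iff infty).2 (T.mem_endComponent_of_iterate_up_ne infty ?_)
    (hbase.2 _ h)
  intro s
  rw [← Function.iterate_add_apply]
  exact T.iterate_up_ne infty v₀ (by omega)

theorem eq_of_adj_iterate_up (T : TreeDyn V) (infty : T.G.end) {v₀ : V}
    (hbase : T.IsBase infty v₀) {k : ℕ} {z : V}
    (h : T.G.Adj ((T.up infty)^[k + 1] v₀) z) :
    z = (T.up infty)^[k] v₀ ∨ z = (T.up infty)^[k + 2] v₀ := by
  by_contra! hne
  have hcard := T.ncard_neighborSet_iterate_up infty hbase k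
  have hsub : ({z, (T.up infty)^[k] v₀, (T.up infty)^[k + 2] v₀} : Set V) ⊆
      T.G.neighborSet ((T.up infty)^[k + 1] v₀) := by
    rintro a (rfl | rfl | rfl)
    · exact h
    · rw [mem_neighborSet, Function.iterate_succ_apply']
      exact (T.adj_up infty _).symm
    · rw [mem_neighborSet, Function.iterate_succ_apply' _ (k + 1)]
      exact T.adj_up infty _
  have hle := Set.ncard_le_ncard hsub (T.locFin _)
  have hne' : (T.up infty)^[k] v₀ ≠ (T.up infty)^[k + 2] v₀ := fun heq => by
    have := T.iterate_up_injective infty v₀ heq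
    omega
  rw [Set.ncard_insert_of_notMem (by simpa using hne), Set.ncard_pair hne'] at hle
  omega

end TreeDyn

namespace SimpleGraph

variable {V : Type}

theorem ComponentCompl.eq_of_mem {G : SimpleGraph V} {K : Set V} {C D : G.ComponentCompl K} {x : V}
    (hC : x ∈ C) (hD : x ∈ D) : C = D :=
  hC.choose_spec.symm.trans hD.choose_spec

/-- An injective ray converges to an end. -/
theorem exists_end_of_ray {G : SimpleGraph V} {c : ℕ → V} (hc : Function.Injective c)
    (hadj : ∀ n, G.Adj (c n) (c (n + 1))) :
    ∃ p : G.end, ∀ (K : Finset V) (n : ℕ), (∀ m ≥ n, c m ∉ K) → c n ∈ endComponent p K := by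
  have hfin : ∀ K : Finset V, ∃ N, ∀ n ≥ N, c n ∉ K := by
    intro K
    obtain ⟨N, hN⟩ := (K.finite_toSet.preimage hc.injOn).bddAbove
    refine ⟨N + 1, fun n hn hK => ?_⟩
    have := hN (show n ∈ c ⁻¹' (K : Set V) from hK)
    omega
  choose N hN using hfin
  let C : ∀ K : Finset V, G.ComponentCompl (K : Set V) := fun K =>
    G.componentComplMk (K := (K : Set V)) (v := c (N K)) (hN K _ le_rfl)
  have hC : ∀ K, ∀ n ≥ N K, c n ∈ C K := by
    intro K n hn
    induction n, hn using Nat.le_induction with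
    | base => exact componentComplMk_mem G _
    | succ n hn ih => exact ComponentCompl.mem_of_adj _ _ ih (hN K _ (by omega)) (hadj n)
  refine ⟨⟨fun K => C K.unop, ?_⟩, ?_⟩
  · intro L K f
    have hLK : (K.unop : Set V) ⊆ (L.unop : Set V) := CategoryTheory.le_of_op_hom f
    exact ComponentCompl.eq_of_mem
      (ComponentCompl.subset_hom _ hLK (hC L.unop (max (N L.unop) (N K.unop)) (le_max_left _ _)))
      (hC K.unop _ (le_max_right _ _))
  · intro K n hn
    have key : ∀ d, c (n + d) ∈ C K → c n ∈ C K := by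
      intro d
      induction d with
      | zero => exact id
      | succ d ih =>
        intro h
        exact ih (ComponentCompl.mem_of_adj _ _ h (hn _ (by omega)) (hadj (n + d)).symm)
    exact key (N K) (hC K _ (by omega))

/-- An end is isolated as soon as it is determined by its component outside one finite set. -/
theorem isIsolatedEnd_of_forall_eq {G : SimpleGraph V} {p : G.end} (K : Finset V)
    (h : ∀ e : G.end, endComponent e K = endComponent p K → e = p) : IsIsolatedEnd G p := by
  refine ⟨{f | f (op K) = p.val (op K)}, ?_, ?_⟩
  · exact iInf_le (fun K : (Finset V)ᵒᵖ => TopologicalSpace.induced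
      (fun f : (j : (Finset V)ᵒᵖ) → G.componentComplFunctor.obj j => f K) ⊥) (op K) _
      ⟨{p.val (op K)}, trivial, rfl⟩
  · ext e
    exact ⟨fun he => h e he, fun he => by rw [Set.mem_singleton_iff.1 he]; rfl⟩

/-- An injective ray through vertices of valence two converges to an isolated end. -/
theorem exists_isIsolatedEnd_of_ray {G : SimpleGraph V} {c : ℕ → V} (hc : Function.Injective c)
    (hadj : ∀ n, G.Adj (c n) (c (n + 1)))
    (hthin : ∀ n z, G.Adj (c (n + 1)) z → z = c n ∨ z = c (n + 2)) :
    ∃ p : G.end, IsIsolatedEnd G p ∧ c 2 ∈ endComponent p {c 1} := by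
  classical
  obtain ⟨p, hp⟩ := exists_end_of_ray hc hadj
  have hp2 : c 2 ∈ endComponent p {c 1} := hp _ _ fun m hm h => by
    have := hc (Finset.mem_singleton.1 h)
    omega
  have htail : ∀ z ∈ endComponent p {c 1}, ∃ m ≥ 2, z = c m := by
    intro z hz
    obtain ⟨q, -, hq⟩ := ComponentCompl.exists_isPath hp2 hz
    have key : ∀ {x y : V} (q : G.Walk x y), c 1 ∉ q.support → (∃ m ≥ 2, x = c m) →
        ∃ m ≥ 2, y = c m := by
      intro x y q
      induction q with
      | nil => exact fun _ h => h
      | cons h q ih =>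
        rintro hq ⟨m, hm, rfl⟩
        rw [Walk.support_cons, List.mem_cons, not_or] at hq
        refine ih hq.2 ?_
        obtain ⟨m, rfl⟩ := Nat.exists_eq_add_of_le' hm
        rcases hthin _ _ h with rfl | rfl
        · refine ⟨m + 1, ?_, rfl⟩
          rcases m with _ | m
          · exact absurd (Walk.start_mem_support q) hq.2
          · omega
        · exact ⟨m + 3, by omega, rfl⟩
    exact key q (hq _ (by simp)) ⟨2, le_rfl, rfl⟩
  refine ⟨p, isIsolatedEnd_of_forall_eq {c 1} fun e he => ?_, hp2⟩
  refine Subtype.ext (funext fun K' => ?_)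
  obtain ⟨N, hN⟩ := (K'.unop.finite_toSet.preimage hc.injOn).bddAbove
  obtain ⟨z, hz⟩ := exists_mem_endComponent e
    (K'.unop ∪ {c 1} ∪ (Finset.range (N + 1)).image c)
  have hz1 : z ∈ endComponent p {c 1} := he ▸ mem_endComponent_anti e (by simp) hz
  obtain ⟨m, -, rfl⟩ := htail z hz1
  have hmN : N < m := by
    by_contra! hle
    refine ComponentCompl.notMem_of_mem hz ?_
    simp only [Finset.coe_union, Finset.coe_image, Finset.coe_range]
    exact Or.inr ⟨m, by simpa using Nat.lt_succ_of_le hle, rfl⟩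
  have hzK : c m ∈ endComponent e K'.unop := mem_endComponent_anti e (by
    intro a ha; simp [ha]) hz
  refine ComponentCompl.eq_of_mem hzK (hp _ _ fun k hk hmem => ?_)
  have := hN (show k ∈ c ⁻¹' (K'.unop : Set V) from hmem)
  omega

end SimpleGraph

/-- A bounded monotone sequence of natural numbers is eventually constant. -/
theorem Nat.exists_forall_ge_eq_of_monotone_of_bounded {a : ℕ → ℕ} (ha : Monotone a) {D : ℕ}
    (hD : ∀ n, a n ≤ D) : ∃ N, ∀ n ≥ N, a n = a N := by
  have hb : BddAbove (Set.range a) := ⟨D, by rintro _ ⟨n, rfl⟩; exact hD n⟩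
  obtain ⟨N, hN⟩ := Nat.sSup_mem (Set.range_nonempty a) hb
  exact ⟨N, fun n hn => le_antisymm (hN ▸ le_csSup hb ⟨n, rfl⟩) (ha hn)⟩

namespace TreeDyn

variable {V : Type}

/-- No descending sequence consists of vertices of valence two, since `infty` is the only
isolated end. -/
theorem not_forall_adj_of_descending (T : TreeDyn V) (infty : T.G.end)
    (huniq : ∀ e : T.G.end, IsIsolatedEnd T.G e → e = infty) {c : ℕ → V}
    (hup : ∀ n, T.up infty (c (n + 1)) = c n) :
    ¬ ∀ n z, T.G.Adj (c (n + 1)) z → z = c n ∨ z = c (n + 2) := by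
  intro hthin
  have hiter : ∀ k n, (T.up infty)^[k] (c (n + k)) = c n := by
    intro k
    induction k with
    | zero => exact fun _ => rfl
    | succ k ih =>
      intro n
      rw [Function.iterate_succ_apply, ← Nat.add_assoc, hup, ih]
  have hc : Function.Injective c := by
    intro m n h
    wlog hmn : m ≤ n generalizing m n
    · exact (this h.symm (by omega)).symm
    obtain ⟨k, rfl⟩ := Nat.exists_eq_add_of_le hmn
    by_contra hne
    exact T.iterate_up_ne infty (c (m + k)) (n := k) (by omega) ((hiter k m).trans h)
  have hadj : ∀ n, T.G.Adj (c n) (c (n + 1)) := fun n => by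
    simpa only [hup] using (T.adj_up infty (c (n + 1))).symm
  obtain ⟨p, hp, hmem⟩ := exists_isIsolatedEnd_of_ray hc hadj hthin
  obtain rfl := huniq p hp
  have h := T.eq_up p (hadj 1) hmem
  rw [hup] at h
  exact absurd (hc h) (by norm_num)

section Degree

variable {T : TreeDyn V} {dV : V → ℕ} {dE : V → V → ℕ}

theorem finite_adj_fiber (T : TreeDyn V) (v u : V) : {z | T.G.Adj v z ∧ T.F z = u}.Finite :=
  (T.locFin v).subset fun _ h => h.1

theorem IsLocalDeg.sum_adj_fiber (hdeg : T.IsLocalDeg dV dE) {v w : V} (h : T.G.Adj v w) :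
    dV v = ∑ z ∈ (T.finite_adj_fiber v (T.F w)).toFinset, dE v z := by
  rw [hdeg.2.2.2.2 h, finsum_mem_eq_finite_toFinset_sum]

theorem IsLocalDeg.dE_le (hdeg : T.IsLocalDeg dV dE) {v w : V} (h : T.G.Adj v w) :
    dE v w ≤ dV v := by
  rw [hdeg.sum_adj_fiber h]
  exact Finset.single_le_sum (f := dE v) (fun _ _ => Nat.zero_le _) (by simpa using h)

theorem IsLocalDeg.dE_eq (hdeg : T.IsLocalDeg dV dE) {v w : V} (h : T.G.Adj v w)
    (huniq : ∀ z, T.G.Adj v z → T.F z = T.F w → z = w) : dE v w = dV v := by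
  rw [hdeg.sum_adj_fiber h, Finset.sum_eq_single_of_mem w (by simpa using h)]
  intro z hz hne
  simp only [Set.Finite.mem_toFinset, Set.mem_ofPred_eq] at hz
  exact absurd (huniq z hz.1 hz.2) hne

theorem IsLocalDeg.eq_of_dE_eq (hdeg : T.IsLocalDeg dV dE) {v w z : V} (h : T.G.Adj v w)
    (heq : dE v w = dV v) (hz : T.G.Adj v z) (hF : T.F z = T.F w) : z = w := by
  classical
  by_contra hne
  have hle : ∑ a ∈ {z, w}, dE v a ≤ dV v := by
    rw [hdeg.sum_adj_fiber h]
    refine Finset.sum_le_sum_of_subset ?_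
    intro a ha
    rcases Finset.mem_insert.1 ha with rfl | ha
    · simpa using ⟨hz, hF⟩
    · rw [Finset.mem_singleton.1 ha]
      simpa using h
  rw [Finset.sum_pair hne] at hle
  have := hdeg.2.2.1 hz
  omega

theorem IsGlobalDeg.sum_fiber {Dg : ℕ} (hDg : T.IsGlobalDeg dE Dg) (hdeg : T.IsLocalDeg dV dE)
    {v w : V} (h : T.G.Adj v w) :
    Dg = ∑ a ∈ (T.finFibers v).toFinset, dV a := by
  rw [hDg h, finsum_mem_eq_finite_toFinset_sum _ (T.finFibers v)]
  refine Finset.sum_congr rfl fun a ha => ?_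
  obtain rfl : T.F a = v := by simpa using ha
  obtain ⟨b, hab, rfl⟩ := T.edgeSurj h
  exact (hdeg.2.2.2.2 hab).symm

theorem IsGlobalDeg.dV_le {Dg : ℕ} (hDg : T.IsGlobalDeg dE Dg) (hdeg : T.IsLocalDeg dV dE)
    {v w : V} (h : T.G.Adj v w) : dV v ≤ Dg := by
  rw [hDg.sum_fiber hdeg (T.adjMap h)]
  exact Finset.single_le_sum (f := dV) (fun _ _ => Nat.zero_le _) (by simp)

theorem IsGlobalDeg.ncard_fiber_le {Dg : ℕ} (hDg : T.IsGlobalDeg dE Dg)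
    (hdeg : T.IsLocalDeg dV dE) {v w : V} (h : T.G.Adj v w) : {a | T.F a = v}.ncard ≤ Dg := by
  rw [hDg.sum_fiber hdeg h, Set.ncard_eq_toFinset_card _ (T.finFibers v), Finset.card_eq_sum_ones]
  exact Finset.sum_le_sum fun a _ => hdeg.2.1 a

end Degree

/-- If `F` sends the upper edge of `y` to a lower edge, then every edge at `y` whose image is
the upper edge of `F y` leads to a lower neighbour of `y` with the same property. -/
theorem descend_of_map_up_ne (T : TreeDyn V) (infty : T.G.end) {y z : V}
    (hy : T.F (T.up infty y) ≠ T.up infty (T.F y)) (hz : T.G.Adj y z)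
    (hF : T.F z = T.up infty (T.F y)) :
    T.up infty z = y ∧ T.F (T.up infty z) ≠ T.up infty (T.F z) := by
  have hup : T.up infty z = y :=
    (T.eq_up_or_up_eq infty hz).resolve_left (by rintro rfl; exact hy hF)
  refine ⟨hup, ?_⟩
  rw [hup, hF]
  exact (T.up_up_ne infty _).symm

theorem map_up (T : TreeDyn V) (infty : T.G.end)
    (huniq : ∀ e : T.G.end, IsIsolatedEnd T.G e → e = infty)
    {dV : V → ℕ} {dE : V → V → ℕ} (hdeg : T.IsLocalDeg dV dE)
    {v₀ : V} (hbase : T.IsBase infty v₀) {Dg : ℕ} (hDg : T.IsGlobalDeg dE Dg) (x : V) :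
    T.F (T.up infty x) = T.up infty (T.F x) := by
  by_contra hx
  have hchild : ∀ y, ∃ z, T.F (T.up infty y) ≠ T.up infty (T.F y) →
      T.G.Adj y z ∧ T.F z = T.up infty (T.F y) := by
    intro y
    obtain ⟨z, hz⟩ := T.edgeSurj (T.adj_up infty (T.F y))
    exact ⟨z, fun _ => hz⟩
  choose child hchild using hchild
  let B : ℕ → Set V := fun k =>
    {y | T.F y = (T.up infty)^[k] v₀ ∧ T.F (T.up infty y) ≠ T.up infty (T.F y)}
  have hstep : ∀ {k y z}, y ∈ B k → T.G.Adj y z → T.F z = T.up infty (T.F y) →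
      T.up infty z = y ∧ z ∈ B (k + 1) := by
    intro k y z hy hz hF
    obtain ⟨h1, h2⟩ := T.descend_of_map_up_ne infty hy.2 hz hF
    exact ⟨h1, by rw [hF, hy.1, Function.iterate_succ_apply'], h2⟩
  have hchildB : ∀ {k y}, y ∈ B k → T.up infty (child y) = y ∧ child y ∈ B (k + 1) :=
    fun {k y} hy => hstep hy (hchild y hy.2).1 (hchild y hy.2).2
  have hfin : ∀ k, (B k).Finite := fun k => (T.finFibers _).subset fun y hy => hy.1
  have himage : ∀ k, child '' B k ⊆ B (k + 1) := by
    rintro k _ ⟨y, hy, rfl⟩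
    exact (hchildB hy).2
  have hinj : ∀ k, Set.InjOn child (B k) := fun k y hy z hz h => by
    rw [← (hchildB hy).1, h, (hchildB hz).1]
  have hmono : Monotone fun k => (B k).ncard := monotone_nat_of_le_succ fun k => by
    rw [← (hinj k).ncard_image]
    exact Set.ncard_le_ncard (himage k) (hfin _)
  obtain ⟨N, hN⟩ := Nat.exists_forall_ge_eq_of_monotone_of_bounded hmono (D := Dg) fun k =>
    (Set.ncard_le_ncard (fun y hy => hy.1) (T.finFibers _)).trans
      (hDg.ncard_fiber_le hdeg (T.adj_up infty _))
  obtain ⟨y, k, hNk, hy⟩ : ∃ y k, N ≤ k ∧ y ∈ B k := by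
    obtain ⟨i, j, hij⟩ := T.exists_iterate_up_eq infty (T.F x) v₀
    have hreach : ∀ n, T.F (child^[n] x) = (T.up infty)^[n] (T.F x) ∧
        T.F (T.up infty (child^[n] x)) ≠ T.up infty (T.F (child^[n] x)) := by
      intro n
      induction n with
      | zero => exact ⟨rfl, hx⟩
      | succ n ih =>
        obtain ⟨h1, h2⟩ := hchild _ ih.2
        rw [Function.iterate_succ_apply', Function.iterate_succ_apply']
        exact ⟨by rw [h2, ih.1], (T.descend_of_map_up_ne infty ih.2 h1 h2).2⟩
    refine ⟨child^[N + i] x, N + j, by omega, ?_, (hreach _).2⟩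
    rw [(hreach _).1, Function.iterate_add_apply, hij, ← Function.iterate_add_apply]
  have himage_eq : ∀ n ≥ N, child '' B n = B (n + 1) := fun n hn => by
    refine Set.eq_of_subset_of_ncard_le (himage n) ?_ (hfin _)
    rw [(hinj n).ncard_image]
    exact ((hN (n + 1) (by omega)).trans (hN n hn).symm).le
  have hcB : ∀ n, child^[n] y ∈ B (k + n) := by
    intro n
    induction n with
    | zero => exact hy
    | succ n ih =>
      rw [Function.iterate_succ_apply']
      exact (hchildB ih).2
  have hcup : ∀ n, T.up infty (child^[n + 1] y) = child^[n] y := fun n => by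
    rw [Function.iterate_succ_apply']
    exact (hchildB (hcB n)).1
  have hcadj : ∀ n, T.G.Adj (child^[n] y) (child^[n + 1] y) := fun n => by
    rw [Function.iterate_succ_apply']
    exact (hchild _ (hcB n).2).1
  have hcuniq : ∀ n z, T.G.Adj (child^[n] y) z → T.F z = T.F (child^[n + 1] y) →
      z = child^[n + 1] y := by
    intro n z hz hF
    rw [Function.iterate_succ_apply'] at hF ⊢
    rw [(hchild _ (hcB n).2).2] at hF
    obtain ⟨h1, h2⟩ := hstep (hcB n) hz hF
    rw [← himage_eq _ (by omega)] at h2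
    obtain ⟨a, ha, rfl⟩ := h2
    rw [← h1, (hchildB ha).1]
  have hdE : ∀ n, dE (child^[n + 1] y) (child^[n] y) = dV (child^[n] y) := fun n => by
    rw [hdeg.1, hdeg.dE_eq (hcadj n) (hcuniq n)]
  have hdmono : Monotone fun n => dV (child^[n] y) := monotone_nat_of_le_succ fun n => by
    rw [← hdE n]
    exact hdeg.dE_le (hcadj n).symm
  obtain ⟨M, hM⟩ := Nat.exists_forall_ge_eq_of_monotone_of_bounded hdmono (D := Dg) fun n =>
    hDg.dV_le hdeg (hcadj n)
  refine T.not_forall_adj_of_descending infty huniq (c := fun n => child^[M + n] y)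
    (fun n => hcup (M + n)) fun n z hz => ?_
  have hz' : T.G.Adj (child^[M + n + 1] y) z := hz
  have hFz := T.adjMap hz'
  rw [(hcB (M + n + 1)).1] at hFz
  rcases T.eq_of_adj_iterate_up infty hbase hFz with h | h
  · left
    refine hdeg.eq_of_dE_eq (hcadj (M + n)).symm ?_ hz' (h.trans (hcB (M + n)).1.symm)
    rw [hdE]
    exact (hM (M + n) (by omega)).trans (hM (M + n + 1) (by omega)).symm
  · right
    exact hcuniq (M + n + 1) z hz' (h.trans (hcB (M + n + 2)).1.symm)

/-- A vertex on the ray from the base to `infty` is the only vertex in its fiber. -/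
theorem eq_of_map_eq_of_iterate_up (T : TreeDyn V) (infty : T.G.end)
    (hmap : ∀ x, T.F (T.up infty x) = T.up infty (T.F x))
    {v₀ : V} (hbase : T.IsBase infty v₀) (k : ℕ) {a : V}
    (ha : T.F a = T.F ((T.up infty)^[k] v₀)) : a = (T.up infty)^[k] v₀ := by
  have hiter : ∀ n x, T.F ((T.up infty)^[n] x) = (T.up infty)^[n] (T.F x) := fun n x =>
    (Function.Semiconj.iterate_right (f := T.F) hmap n) x
  obtain ⟨i, j, hij⟩ := T.exists_iterate_up_eq infty a ((T.up infty)^[k] v₀)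
  obtain rfl : i = j := by
    refine T.iterate_up_injective infty (T.F a) ?_
    have := congrArg T.F hij
    rwa [hiter, hiter, ← ha] at this
  induction i with
  | zero => exact hij
  | succ i ih =>
    refine ih ?_
    rw [Function.iterate_succ_apply', Function.iterate_succ_apply',
      ← Function.iterate_add_apply] at hij
    have hadj := T.adj_up infty ((T.up infty)^[i] a)
    rw [hij, ← Function.iterate_succ_apply' (T.up infty)] at hadj
    rw [← Function.iterate_add_apply]
    refine (T.eq_of_adj_iterate_up infty hbase hadj.symm).resolve_right fun h => ?_
    have hloop := T.up_up_ne infty ((T.up infty)^[i] a)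
    simp only [hij, ← Function.iterate_succ_apply' (T.up infty)] at hloop
    exact hloop h.symm

end TreeDyn

/-- **Degrees of upper edges.**
Let `F : T → T` be a polynomial-like branched covering of a simplicial tree
with local degree function `(dV, dE)`, base `v₀` and global degree `Dg`.
Then for every vertex `v`, the upper edge of `v` (the edge `{v,w}` with `w`
not below `v`, i.e. leading towards `infty`) satisfies `dE v w = dV v`;
and whenever the combinatorial height of `v` is nonnegative, `dV v = Dg`. -/
theorem upper_edge_degree_and_global_degree
    {V : Type} (T : TreeDyn V) (infty : T.G.end)
    (hpl : T.IsPolyLike infty)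
    (dV : V → ℕ) (dE : V → V → ℕ) (hdeg : T.IsLocalDeg dV dE)
    (v₀ : V) (hbase : T.IsBase infty v₀)
    (Dg : ℕ) (hDg : T.IsGlobalDeg dE Dg) :
    (∀ v w : V, T.G.Adj v w → ¬ T.Below infty v w → dE v w = dV v) ∧
    (∀ v : V, 0 ≤ T.height infty v₀ v → dV v = Dg) := by
  have hmap := T.map_up infty hpl.2.2.1 hdeg hbase hDg
  refine ⟨fun v w hvw hw => ?_, fun v hv => ?_⟩
  · obtain rfl := T.eq_up infty hvw ((T.not_below_iff infty).1 hw)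
    refine hdeg.dE_eq hvw fun z hz hF => ?_
    refine (T.eq_up_or_up_eq infty hz).resolve_right fun hup => ?_
    refine T.up_up_ne infty (T.F v) ?_
    rw [← hmap v, ← hF, ← hmap z, hup]
  · have hbelow : T.Below infty v v₀ := by
      by_contra h
      rw [TreeDyn.height, if_neg h] at hv
      exact h (Or.inl (T.isTree.connected.dist_eq_zero_iff.1 (by omega)))
    obtain ⟨k, rfl⟩ := T.exists_iterate_up_of_below infty hbelow
    rw [hDg.sum_fiber hdeg (T.adj_up infty (T.F ((T.up infty)^[k] v₀))),
      Finset.sum_eq_single_of_mem ((T.up infty)^[k] v₀) (by simp)]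
    intro a ha hne
    exact absurd (T.eq_of_map_eq_of_iterate_up infty hmap hbase k (by simpa using ha)) hne
end

section
/- Let F : T → T be a polynomial-like branched covering of a simplicial tree with local degree function deg. Then the base v₀ is a critical point: its critical multiplicity satisfies m(v₀) > 0. -/
open SimpleGraph Function Opposite

namespace SimpleGraph

variable {V : Type} {G : SimpleGraph V}

/-- In a tree rooted at `r`, a vertex has at most one neighbour closer to the root. -/
theorem IsTree.eq_of_adj_of_dist_eq_add_one (hG : G.IsTree) {r p q x : V}
    (hp : G.Adj p x) (hq : G.Adj q x) (hpx : G.dist r x = G.dist r p + 1)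
    (hqx : G.dist r x = G.dist r q + 1) : p = q := by
  obtain ⟨P, hP⟩ := hG.connected.exists_walk_length_eq_dist r p
  obtain ⟨Q, hQ⟩ := hG.connected.exists_walk_length_eq_dist r q
  have hP' : (P.concat hp).IsPath := Walk.isPath_of_length_eq_dist _ (by simp [hP, hpx])
  have hQ' : (Q.concat hq).IsPath := Walk.isPath_of_length_eq_dist _ (by simp [hQ, hqx])
  have h : P.concat hp = Q.concat hq :=
    congrArg Subtype.val
      ((hG.isAcyclic.subsingleton_path r x).elim ⟨_, hP'⟩ ⟨_, hQ'⟩)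
  simpa using congrArg Walk.penultimate h

/-- A step of a non-backtracking path which follows a step away from `r` leads away from `r`. -/
theorem IsTree.dist_eq_add_one_of_ne (hG : G.IsTree) {r p x c : V}
    (hp : G.Adj p x) (hc : G.Adj x c) (hpx : G.dist r x = G.dist r p + 1) (hne : c ≠ p) :
    G.dist r c = G.dist r x + 1 := by
  rcases hG.dist_eq_dist_add_one_of_adj r hc with h | h
  · exact absurd (hG.eq_of_adj_of_dist_eq_add_one hc.symm hp h hpx) hne
  · exact h

/-- A non-backtracking ray in a tree is a geodesic. -/
theorem IsTree.dist_ray (hG : G.IsTree) {w : ℕ → V} (hw : ∀ i, G.Adj (w i) (w (i + 1)))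
    (hne : ∀ i, w (i + 2) ≠ w i) (n : ℕ) : G.dist (w 0) (w n) = n := by
  have key : ∀ n, G.dist (w 0) (w n) = n ∧ G.dist (w 0) (w (n + 1)) = n + 1 := by
    intro n
    induction n with
    | zero => exact ⟨by simp, by simpa using dist_eq_one_iff_adj.2 (hw 0)⟩
    | succ n ih =>
      refine ⟨ih.2, ?_⟩
      rw [hG.dist_eq_add_one_of_ne (hw n) (hw (n + 1)) (by rw [ih.1, ih.2]) (hne n), ih.2]
  exact (key n).1

theorem IsTree.ray_injective (hG : G.IsTree) {w : ℕ → V} (hw : ∀ i, G.Adj (w i) (w (i + 1)))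
    (hne : ∀ i, w (i + 2) ≠ w i) : Function.Injective w := fun a b h => by
  rw [← hG.dist_ray hw hne a, h, hG.dist_ray hw hne b]

theorem ncard_neighborSet_le_two {x a b : V} (h : ∀ u, G.Adj x u → u = a ∨ u = b) :
    (G.neighborSet x).ncard ≤ 2 :=
  (Set.ncard_le_ncard (t := {a, b}) h).trans <|
    (Set.ncard_insert_le a {b}).trans (by rw [Set.ncard_singleton])

/-- A set of vertices closed under adjacency outside `K` contains every component of the complement
of `K` that it meets. -/
theorem ComponentCompl.subset_of_adj_closed {K S : Set V} (C : G.ComponentCompl K) {c : V}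
    (hc : c ∈ C) (hcS : c ∈ S) (hS : ∀ a ∈ S, ∀ b ∉ K, G.Adj a b → b ∈ S) {x : V}
    (hx : x ∈ C) : x ∈ S := by
  obtain ⟨hcK, rfl⟩ := hc
  obtain ⟨hxK, h⟩ := hx
  obtain ⟨p⟩ := (ConnectedComponent.eq.1 h).symm
  have key : ∀ {a b : ↥(Kᶜ)}, (G.induce Kᶜ).Walk a b → a.1 ∈ S → b.1 ∈ S := by
    intro a b p
    induction p with
    | nil => exact id
    | @cons a b c hab _ ih => exact fun ha => ih (hS a.1 ha b.1 b.2 hab)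
  exact key p hcS

/-- An injective ray eventually leaves every finite set. -/
theorem exists_forall_ge_notMem_of_injective_s9 {w : ℕ → V} (hinj : Function.Injective w)
    (K : Finset V) : ∃ n, ∀ j, n ≤ j → w j ∉ (K : Set V) := by
  have hfin : (w ⁻¹' (K : Set V)).Finite := K.finite_toSet.preimage hinj.injOn
  obtain ⟨n, hn⟩ := hfin.bddAbove
  exact ⟨n + 1, fun j hj hjK => absurd (hn hjK) (by omega)⟩

/-- The component of the complement of `K` selected by an end. -/
def endCompl (e : G.end) (K : Finset V) : G.ComponentCompl (K : Set V) :=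
  e.val (op K)

/-- The end determined by an injective ray. -/
theorem exists_end_of_ray_s9 {w : ℕ → V} (hinj : Function.Injective w)
    (hw : ∀ i, G.Adj (w i) (w (i + 1))) :
    ∃ e : G.end, ∀ (K : Finset V) (n : ℕ), (∀ j, n ≤ j → w j ∉ (K : Set V)) →
      ∀ j, n ≤ j → w j ∈ endCompl e K := by
  choose N hN using exists_forall_ge_notMem_of_injective_s9 hinj
  have heq : ∀ (K : Finset V) (n : ℕ), (∀ j, n ≤ j → w j ∉ (K : Set V)) →
      ∀ j, n ≤ j → ∀ hj : w j ∉ (K : Set V), ∀ hn : w n ∉ (K : Set V),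
      G.componentComplMk hj = G.componentComplMk hn := by
    intro K n hK j hj
    induction j, hj using Nat.le_induction with
    | base => exact fun _ _ => rfl
    | succ j hj ih =>
      intro hj' hn
      rw [← ih (hK j hj) hn]
      exact (G.componentComplMk_eq_of_adj _ _ (hw j)).symm
  have heq' : ∀ (K : Finset V) (n m : ℕ), (∀ j, n ≤ j → w j ∉ (K : Set V)) →
      (∀ j, m ≤ j → w j ∉ (K : Set V)) → ∀ hm : w m ∉ (K : Set V), ∀ hn : w n ∉ (K : Set V),
      G.componentComplMk hm = G.componentComplMk hn := by
    intro K n m hn hm hm' hn'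
    rw [← heq K n hn (max n m) (le_max_left _ _) (hn _ (le_max_left _ _)),
      ← heq K m hm (max n m) (le_max_right _ _) (hn _ (le_max_left _ _))]
  refine ⟨⟨fun K => G.componentComplMk (hN K.unop _ le_rfl), ?_⟩, ?_⟩
  · intro L K f
    have hsub : (K.unop : Set V) ⊆ L.unop := CategoryTheory.le_of_op_hom f
    exact heq' K.unop (N K.unop) (N L.unop) (hN _)
      (fun j hj hjK => hN L.unop j hj (hsub hjK)) _ _
  · intro K n hn j hj
    exact ⟨hn j hj, heq' K (N K) j (hN K) (fun i hi => hn i (hj.trans hi)) _ _⟩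

theorem mem_end_of_subset (e : G.end) {K L : Finset V} (h : K ⊆ L) {x : V}
    (hx : x ∈ endCompl e L) :
    x ∈ endCompl e K := by
  have h' : (endCompl e L).hom (Finset.coe_subset.2 h) = endCompl e K :=
    e.prop (CategoryTheory.opHomOfLE h)
  rw [← h']
  exact ComponentCompl.subset_hom _ _ hx

/-- A ray without branching determines an isolated end. -/
theorem exists_isIsolatedEnd_of_ray_s9 {w : ℕ → V} (hinj : Function.Injective w)
    (hw : ∀ i, G.Adj (w i) (w (i + 1)))
    (hnbr : ∀ i u, G.Adj (w (i + 1)) u → u = w i ∨ u = w (i + 2)) :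
    ∃ e : G.end, IsIsolatedEnd G e ∧ ∀ K : Finset V, ∃ n, ∀ j, n ≤ j →
      w j ∈ endCompl e K := by
  classical
  obtain ⟨e, he⟩ := exists_end_of_ray_s9 hinj hw
  refine ⟨e, ?_, fun K => ?_⟩
  · have hset : ({e} : Set G.end) =
        (Subtype.val : G.end → _) ⁻¹' {f | f (op {w 0}) = e.val (op {w 0})} := by
      ext e'
      refine ⟨fun h => by rw [Set.mem_singleton_iff.1 h]; rfl, fun h => ?_⟩
      have h : e'.val (op {w 0}) = e.val (op {w 0}) := h
      refine Subtype.ext (funext fun K => ?_)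
      induction K using Opposite.rec with | _ K => ?_
      obtain ⟨m, hm⟩ := exists_forall_ge_notMem_of_injective_s9 hinj K
      set L : Finset V := K ∪ (Finset.range (m + 1)).image w with hL
      obtain ⟨x, hx⟩ := ComponentCompl.nonempty (endCompl e' L)
      have hw0 : ∀ j, 1 ≤ j → w j ∉ (({w 0} : Finset V) : Set V) := fun j hj h' => by
        have := hinj (by simpa using h' : w j = w 0)
        omega
      have hx0 : x ∈ endCompl e {w 0} := by
        rw [show endCompl e {w 0} = endCompl e' {w 0} from h.symm]
        refine mem_end_of_subset e' ?_ hx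
        rw [Finset.singleton_subset_iff, hL, Finset.mem_union, Finset.mem_image]
        exact Or.inr ⟨0, by simp, rfl⟩
      obtain ⟨j, rfl⟩ : ∃ j, w (j + 1) = x := by
        refine ComponentCompl.subset_of_adj_closed (S := {x | ∃ j, w (j + 1) = x}) _
          (he {w 0} 1 hw0 1 le_rfl) ⟨0, rfl⟩ ?_ hx0
        rintro _ ⟨j, rfl⟩ b hb hadj
        rcases hnbr j b hadj with rfl | rfl
        · cases j with
          | zero => simp at hb
          | succ j => exact ⟨j, rfl⟩
        · exact ⟨j + 1, rfl⟩
      have hxL : w (j + 1) ∉ (L : Set V) := ComponentCompl.notMem_of_mem hx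
      have hj : m ≤ j + 1 := by
        by_contra hlt
        refine hxL (Finset.mem_coe.2 (Finset.mem_union_right _ (Finset.mem_image.2 ⟨j + 1, ?_, rfl⟩)))
        rw [Finset.mem_range]
        omega
      obtain ⟨_, h1⟩ := mem_end_of_subset e' (Finset.subset_union_left : K ⊆ L) hx
      obtain ⟨_, h2⟩ := he K m hm (j + 1) hj
      exact h1.symm.trans h2
    unfold IsIsolatedEnd
    rw [hset]
    refine ⟨_, ?_, rfl⟩
    exact iInf_le (fun K : (Finset V)ᵒᵖ => TopologicalSpace.induced
      (fun f : (∀ j, G.componentComplFunctor.obj j) => f K) ⊥) (op {w 0}) _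
      ⟨{e.val (op {w 0})}, trivial, rfl⟩
  · obtain ⟨n, hn⟩ := exists_forall_ge_notMem_of_injective_s9 hinj K
    exact ⟨n, he K n hn⟩

end SimpleGraph

namespace TreeDyn

variable {V : Type} {T : TreeDyn V}

/-- The fibre of the branched covering over a vertex. -/
noncomputable def fiber (T : TreeDyn V) (y : V) : Finset V := (T.finFibers y).toFinset

@[simp]
theorem mem_fiber {x y : V} : x ∈ T.fiber y ↔ T.F x = y := by
  simp [fiber]

open Classical in
/-- The degree of a vertex as a sum over the edges lying above a given edge. -/
theorem IsLocalDeg.dV_eq_sum {dV : V → ℕ} {dE : V → V → ℕ} (hdeg : T.IsLocalDeg dV dE)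
    {a z : V} (h : T.G.Adj (T.F a) z) :
    dV a = ∑ b ∈ T.fiber z, if T.G.Adj a b then dE a b else 0 := by
  obtain ⟨w, hw, rfl⟩ := T.edgeSurj h
  rw [hdeg.2.2.2.2 hw, ← Finset.sum_filter, ← finsum_mem_coe_finset]
  refine finsum_mem_congr (Set.ext fun b => ?_) fun _ _ => rfl
  simp [and_comm]

/-- Adjacent vertices have fibres of the same total degree. -/
theorem IsLocalDeg.sum_fiber_eq {dV : V → ℕ} {dE : V → V → ℕ} (hdeg : T.IsLocalDeg dV dE)
    {y z : V} (h : T.G.Adj y z) : ∑ a ∈ T.fiber y, dV a = ∑ b ∈ T.fiber z, dV b := by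
  classical
  rw [Finset.sum_congr rfl fun a ha =>
      hdeg.dV_eq_sum (z := z) (by rwa [mem_fiber.1 ha]), Finset.sum_comm]
  refine Finset.sum_congr rfl fun b hb => ?_
  rw [hdeg.dV_eq_sum (z := y) (by rw [mem_fiber.1 hb]; exact h.symm)]
  refine Finset.sum_congr rfl fun a _ => ?_
  rw [T.G.adj_comm, hdeg.1]

theorem IsLocalDeg.card_fiber_le {dV : V → ℕ} {dE : V → V → ℕ} (hdeg : T.IsLocalDeg dV dE)
    {v : ℕ → V} (hv : ∀ i, T.G.Adj (v i) (v (i + 1))) (i : ℕ) :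
    (T.fiber (v i)).card ≤ ∑ a ∈ T.fiber (v 0), dV a := by
  have hconst : ∑ a ∈ T.fiber (v 0), dV a = ∑ a ∈ T.fiber (v i), dV a := by
    induction i with
    | zero => rfl
    | succ i ih => rw [ih, hdeg.sum_fiber_eq (hv i)]
  rw [hconst, Finset.card_eq_sum_ones]
  exact Finset.sum_le_sum fun a _ => hdeg.2.1 a

/-- If the image of `v` has at most two neighbours then the total degree of the edges at `v` is at
most twice the degree of `v`, so a vertex of valence at least three is critical. -/
theorem IsLocalDeg.multV_pos {dV : V → ℕ} {dE : V → V → ℕ} (hdeg : T.IsLocalDeg dV dE)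
    {v a b : V} (hval : 3 ≤ (T.G.neighborSet v).ncard) (ha : T.G.Adj (T.F v) a)
    (hb : T.G.Adj (T.F v) b) (hab : ∀ u, T.G.Adj (T.F v) u → u = a ∨ u = b) :
    0 < T.multV dV dE v := by
  classical
  have hfin := T.locFin v
  set N := hfin.toFinset with hN
  have hmem : ∀ w, w ∈ N ↔ T.G.Adj v w := fun w => by simp [hN]
  have hcard : 3 ≤ N.card := by rwa [hN, ← Set.ncard_eq_toFinset_card _ hfin]
  have hsum : ∑ᶠ w ∈ T.G.neighborSet v, (dE v w - 1) = ∑ w ∈ N, (dE v w - 1) := by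
    rw [← finsum_mem_coe_finset, hN, hfin.coe_toFinset]
  have hsub : N ⊆ (T.fiber a ∪ T.fiber b).filter (T.G.Adj v) := fun w hw => by
    have hw := (hmem w).1 hw
    simpa [hw] using hab _ (T.adjMap hw)
  have htotal : ∑ w ∈ N, dE v w ≤ 2 * dV v := by
    calc ∑ w ∈ N, dE v w
        ≤ ∑ w ∈ (T.fiber a ∪ T.fiber b).filter (T.G.Adj v), dE v w :=
          Finset.sum_le_sum_of_subset hsub
      _ = ∑ w ∈ T.fiber a ∪ T.fiber b, if T.G.Adj v w then dE v w else 0 :=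
          Finset.sum_filter _ _
      _ ≤ (∑ w ∈ T.fiber a, if T.G.Adj v w then dE v w else 0) +
          ∑ w ∈ T.fiber b, if T.G.Adj v w then dE v w else 0 := by
          rw [← Finset.sum_union_inter]
          exact Nat.le_add_right _ _
      _ = 2 * dV v := by rw [← hdeg.dV_eq_sum ha, ← hdeg.dV_eq_sum hb, two_mul]
  have hsplit : ∑ w ∈ N, (dE v w - 1) + N.card = ∑ w ∈ N, dE v w := by
    rw [Finset.card_eq_sum_ones, ← Finset.sum_add_distrib]
    exact Finset.sum_congr rfl fun w hw => Nat.sub_add_cancel (hdeg.2.2.1 ((hmem w).1 hw))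
  rw [multV, hsum]
  omega

/-- A bounded monotone and an antitone sequence of natural numbers are eventually constant
simultaneously. -/
theorem exists_forall_ge_succ_eq {x y : ℕ → ℕ} {N : ℕ} (hx : ∀ i, x i ≤ x (i + 1))
    (hxN : ∀ i, x i ≤ N) (hy : ∀ i, y (i + 1) ≤ y i) :
    ∃ n, ∀ i, n ≤ i → x (i + 1) = x i ∧ y (i + 1) = y i := by
  have hanti : Antitone fun i => y i + (N - x i) := antitone_nat_of_succ_le fun i => by
    have := hx i; have := hy i
    omega
  obtain ⟨n, hn⟩ := wellFoundedGT_iff_monotone_chain_condition.1 (inferInstance : WellFoundedGT ℕᵒᵈ)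
    (⟨fun i => OrderDual.toDual (y i + (N - x i)), hanti⟩ : ℕ →o ℕᵒᵈ)
  refine ⟨n, fun i hi => ?_⟩
  have h1 : y n + (N - x n) = y i + (N - x i) := hn i hi
  have h2 : y n + (N - x n) = y (i + 1) + (N - x (i + 1)) := hn (i + 1) (by omega)
  have := hx i; have := hy i; have := hxN (i + 1)
  omega

/-- Far out along a ray without branching, a vertex lying above the ray and reached from its parent
along an edge above the ray has valence two. -/
theorem IsLocalDeg.eventually_unbranched {dV : V → ℕ} {dE : V → V → ℕ}
    (hdeg : T.IsLocalDeg dV dE) (r : V) {v : ℕ → V} (hinj : Function.Injective v)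
    (hv : ∀ i, T.G.Adj (v i) (v (i + 1)))
    (hnbr : ∀ i u, T.G.Adj (v (i + 1)) u → u = v i ∨ u = v (i + 2)) :
    ∃ n, ∀ i, n ≤ i → ∀ p x c, T.G.Adj p x → T.G.dist r x = T.G.dist r p + 1 → T.F p = v i →
      T.F x = v (i + 1) → T.G.Adj x c → T.F c = v (i + 2) →
      ∀ u, T.G.Adj x u → u = p ∨ u = c := by
  classical
  have hT := T.isTree
  let IsChild : V → V → Prop := fun p x => T.G.Adj p x ∧ T.G.dist r x = T.G.dist r p + 1
  have huniq : ∀ {p q x}, IsChild p x → IsChild q x → p = q := fun hp hq =>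
    hT.eq_of_adj_of_dist_eq_add_one hp.1 hq.1 hp.2 hq.2
  have hchild : ∀ {p x c}, IsChild p x → T.G.Adj x c → c ≠ p → IsChild x c := fun hp hc hne =>
    ⟨hc, hT.dist_eq_add_one_of_ne hp.1 hc hp.2 hne⟩
  obtain ⟨par, hpar⟩ : ∃ par : V → V, ∀ p x, IsChild p x → par x = p := by
    have : ∀ x, ∃ q, ∀ p, IsChild p x → q = p := fun x => by
      by_cases h : ∃ q, IsChild q x
      · exact ⟨h.choose, fun p hp => huniq h.choose_spec hp⟩
      · exact ⟨x, fun p hp => absurd ⟨p, hp⟩ h⟩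
    choose par hpar using this
    exact ⟨par, fun p x h => hpar x p h⟩
  let X : ℕ → Finset V := fun i =>
    (T.fiber (v (i + 1))).filter fun x => ∃ p, IsChild p x ∧ T.F p = v i
  let Y : ℕ → Finset V := fun i =>
    (T.fiber (v i)).filter fun x => ∃ p, IsChild p x ∧ T.F p = v (i + 1)
  have hX : ∀ {i x}, x ∈ X i ↔ T.F x = v (i + 1) ∧ ∃ p, IsChild p x ∧ T.F p = v i := by
    simp [X]
  have hY : ∀ {i x}, x ∈ Y i ↔ T.F x = v i ∧ ∃ p, IsChild p x ∧ T.F p = v (i + 1) := by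
    simp [Y]
  have hne : ∀ {i a b}, T.F a = v (i + 2) → T.F b = v i → a ≠ b := by
    rintro i a _ ha hb rfl
    have := hinj (ha.symm.trans hb)
    omega
  have hXsub : ∀ i, X i ⊆ (X (i + 1)).image par := fun i x hx => by
    obtain ⟨hFx, p, hp, hFp⟩ := hX.1 hx
    obtain ⟨c, hc, hFc⟩ := T.edgeSurj (v := x) (w' := v (i + 2)) (by rw [hFx]; exact hv (i + 1))
    have hxc := hchild hp hc (hne hFc hFp)
    exact Finset.mem_image.2 ⟨c, hX.2 ⟨hFc, x, hxc, hFx⟩, hpar _ _ hxc⟩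
  have hYsub : ∀ i, Y (i + 1) ⊆ (Y i).image par := fun i y hy => by
    obtain ⟨hFy, p, hp, hFp⟩ := hY.1 hy
    obtain ⟨c, hc, hFc⟩ := T.edgeSurj (v := y) (w' := v i) (by rw [hFy]; exact (hv i).symm)
    have hyc := hchild hp hc (hne hFp hFc).symm
    exact Finset.mem_image.2 ⟨c, hY.2 ⟨hFc, y, hyc, hFy⟩, hpar _ _ hyc⟩
  obtain ⟨n, hn⟩ := exists_forall_ge_succ_eq
    (x := fun i => (X i).card) (y := fun i => (Y i).card)
    (fun i => (Finset.card_le_card (hXsub i)).trans Finset.card_image_le)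
    (fun i => (Finset.card_filter_le _ _).trans (hdeg.card_fiber_le hv (i + 1)))
    (fun i => (Finset.card_le_card (hYsub i)).trans Finset.card_image_le)
  refine ⟨n, fun i hi p x c hpx hdx hFp hFx hc hFc u hu => ?_⟩
  obtain ⟨hXc, hYc⟩ := hn i hi
  have hp : IsChild p x := ⟨hpx, hdx⟩
  by_cases hup : u = p
  · exact Or.inl hup
  right
  have hxu := hchild hp hu hup
  rcases hnbr i (T.F u) (by rw [← hFx]; exact T.adjMap hu) with hFu | hFu
  · have himg : Y (i + 1) = (Y i).image par :=
      Finset.eq_of_subset_of_card_le (hYsub i) (Finset.card_image_le.trans hYc.ge)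
    have hxY : x ∈ Y (i + 1) := by
      rw [himg]
      exact Finset.mem_image.2 ⟨u, hY.2 ⟨hFu, x, hxu, hFx⟩, hpar _ _ hxu⟩
    obtain ⟨-, q, hq, hFq⟩ := hY.1 hxY
    exact absurd (huniq hq hp) (hne hFq hFp)
  · have hinjOn : Set.InjOn par (X (i + 1)) := Finset.card_image_iff.1 <|
      le_antisymm Finset.card_image_le (hXc.le.trans (Finset.card_le_card (hXsub i)))
    have hxc := hchild hp hc (hne hFc hFp)
    exact hinjOn (hX.2 ⟨hFu, x, hxu, hFx⟩) (hX.2 ⟨hFc, x, hxc, hFx⟩)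
      ((hpar _ _ hxu).trans (hpar _ _ hxc).symm)

/-- If the unique isolated end of `T` is `infty`, every ray without branching converges to it. -/
theorem IsPolyLike.exists_forall_ge_mem {infty : T.G.end} (hpl : T.IsPolyLike infty) {w : ℕ → V}
    (hinj : Function.Injective w) (hw : ∀ i, T.G.Adj (w i) (w (i + 1)))
    (hnbr : ∀ i u, T.G.Adj (w (i + 1)) u → u = w i ∨ u = w (i + 2)) (K : Finset V) :
    ∃ n, ∀ j, n ≤ j → w j ∈ endCompl infty K := by
  obtain ⟨e, he, hK⟩ := exists_isIsolatedEnd_of_ray_s9 hinj hw hnbr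
  rw [← hpl.2.2.1 e he]
  exact hK K

/-- The ray from the base to `infty`. -/
theorem IsPolyLike.exists_ray {infty : T.G.end} (hpl : T.IsPolyLike infty) {v₀ : V}
    (hbase : T.IsBase infty v₀) :
    ∃ v : ℕ → V, v 0 = v₀ ∧ Function.Injective v ∧ (∀ i, T.G.Adj (v i) (v (i + 1))) ∧
      (∀ i u, T.G.Adj (v (i + 1)) u → u = v i ∨ u = v (i + 2)) ∧
      ∀ x ∈ endCompl infty {v₀}, ∃ i, x = v (i + 1) := by
  classical
  set C := endCompl infty {v₀} with hC
  have hT := T.isTree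
  have hval : ∀ y ∈ C, (T.G.neighborSet y).ncard ≤ 2 := by
    intro y hy
    by_contra! hlt
    have hyv : y ≠ v₀ := fun h => ComponentCompl.notMem_of_mem hy (by simp [h])
    rcases hbase.2 y hlt with h | ⟨h, hne⟩
    · exact hyv h
    · exact hne hy.choose_spec
  have hother : ∀ x y, T.G.Adj x y → y ∈ C →
      ∃ z, T.G.Adj y z ∧ z ≠ x ∧ ∀ u, T.G.Adj y u → u = x ∨ u = z := by
    intro x y hxy hy
    have hx : x ∈ T.G.neighborSet y := hxy.symm
    have hpos : 0 < (T.G.neighborSet y).ncard := (Set.ncard_pos (T.locFin y)).2 ⟨x, hx⟩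
    have htwo : (T.G.neighborSet y).ncard = 2 := by
      have := hval y hy; have := hpl.2.2.2.1 y
      omega
    obtain ⟨a, b, hab, hset⟩ := Set.ncard_eq_two.1 htwo
    have hmem : ∀ u, T.G.Adj y u ↔ u = a ∨ u = b := fun u => by
      rw [← mem_neighborSet, hset]; simp
    rcases (hmem x).1 hx with rfl | rfl
    · exact ⟨b, (hmem b).2 (Or.inr rfl), hab.symm, fun u hu => (hmem u).1 hu⟩
    · exact ⟨a, (hmem a).2 (Or.inl rfl), hab, fun u hu => ((hmem u).1 hu).symm⟩
  let S : Type := {p : V × V // T.G.Adj p.1 p.2 ∧ p.2 ∈ C ∧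
    T.G.dist v₀ p.2 = T.G.dist v₀ p.1 + 1}
  have hstep : ∀ p : S, ∃ q : S, q.1.1 = p.1.2 ∧
      ∀ u, T.G.Adj p.1.2 u → u = p.1.1 ∨ u = q.1.2 := by
    rintro ⟨⟨x, y⟩, hxy, hy, hd⟩
    obtain ⟨z, hyz, hzx, hu⟩ := hother x y hxy hy
    have hdz := hT.dist_eq_add_one_of_ne hxy hyz hd hzx
    have hz : z ∉ (({v₀} : Finset V) : Set V) := fun h => by
      rw [(by simpa using h : z = v₀), dist_self] at hdz
      omega
    exact ⟨⟨(y, z), hyz, ComponentCompl.mem_of_adj y z hy hz hyz, hdz⟩, rfl, hu⟩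
  choose next hnext using hstep
  obtain ⟨⟨v₁, k⟩, hv₁, hk, hadj⟩ := C.exists_adj_boundary_pair hT.connected.preconnected
    ⟨v₀, by simp⟩
  obtain rfl : k = v₀ := by simpa using hk
  let s : ℕ → S := fun n =>
    next^[n] ⟨(k, v₁), hadj.symm, hv₁, by simpa using dist_eq_one_iff_adj.2 hadj.symm⟩
  have hs : ∀ n, s (n + 1) = next (s n) := fun n => Function.iterate_succ_apply' _ _ _
  let v : ℕ → V := fun n => (s n).1.1
  have hsnd : ∀ n, (s n).1.2 = v (n + 1) := fun n => by
    change _ = (s (n + 1)).1.1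
    rw [hs, (hnext (s n)).1]
  have hv : ∀ i, T.G.Adj (v i) (v (i + 1)) := fun i => by
    rw [← hsnd]; exact (s i).2.1
  have hd : ∀ i, T.G.dist k (v i) = i := by
    intro i
    induction i with
    | zero => exact dist_self
    | succ i ih => rw [← hsnd, (s i).2.2.2, show (s i).1.1 = v i from rfl, ih]
  have hnbr : ∀ i u, T.G.Adj (v (i + 1)) u → u = v i ∨ u = v (i + 2) := fun i u hu => by
    rw [← hsnd] at hu
    have := (hnext (s i)).2 u hu
    rwa [← hs, hsnd] at this
  refine ⟨v, rfl, fun a b h => by rw [← hd a, h, hd b], hv, hnbr, fun x hx => ?_⟩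
  refine C.subset_of_adj_closed (S := {x | ∃ i, x = v (i + 1)}) hv₁ ⟨0, hsnd 0⟩ ?_ hx
  rintro _ ⟨i, rfl⟩ b hb hab
  rcases hnbr i b hab with rfl | rfl
  · cases i with
    | zero => exact absurd (by simp [v, s]) hb
    | succ i => exact ⟨i, rfl⟩
  · exact ⟨i + 1, rfl⟩

end TreeDyn

namespace TreeDyn

variable {V : Type} {T : TreeDyn V}

/-- If `F` fixes the ray from the base to `infty` pointwise, its first vertex above the base has
no other preimage. -/
theorem IsPolyLike.eq_of_map_eq {infty : T.G.end} (hpl : T.IsPolyLike infty) {v₀ : V}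
    {v : ℕ → V} (hinj : Function.Injective v) (hv : ∀ i, T.G.Adj (v i) (v (i + 1)))
    (hnbr : ∀ i u, T.G.Adj (v (i + 1)) u → u = v i ∨ u = v (i + 2))
    (hC : ∀ x ∈ endCompl infty {v₀}, ∃ i, x = v (i + 1)) (hfix : ∀ i, T.F (v i) = v i)
    {x : V} (hx : T.F x = v 1) : x = v 1 := by
  obtain ⟨dV, dE, hdeg⟩ := hpl.1
  obtain ⟨w, hw0, hw, hFw⟩ : ∃ w : ℕ → V, w 0 = x ∧ (∀ i, T.G.Adj (w i) (w (i + 1))) ∧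
      ∀ i, T.F (w i) = v (i + 1) := by
    have hlift : ∀ (i : ℕ) (y : V), ∃ z, T.F y = v (i + 1) →
        T.G.Adj y z ∧ T.F z = v (i + 2) := fun i y => by
      by_cases h : T.F y = v (i + 1)
      · obtain ⟨z, hz⟩ := T.edgeSurj (v := y) (w' := v (i + 2)) (by rw [h]; exact hv (i + 1))
        exact ⟨z, fun _ => hz⟩
      · exact ⟨y, fun h' => absurd h' h⟩
    choose lift hlift using hlift
    let w : ℕ → V := fun n => Nat.rec x lift n
    have hFw : ∀ i, T.F (w i) = v (i + 1) := fun i => by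
      induction i with
      | zero => exact hx
      | succ i ih => exact (hlift i (w i) ih).2
    exact ⟨w, rfl, fun i => (hlift i (w i) (hFw i)).1, hFw⟩
  have hwinj : Function.Injective w := fun a b h => by
    have := hinj (by rw [← hFw a, ← hFw b, h] : v (a + 1) = v (b + 1))
    omega
  obtain ⟨k, hk⟩ : ∃ k, T.G.dist v₀ (w (k + 1)) = T.G.dist v₀ (w k) + 1 := by
    by_contra! hno
    have hdec : ∀ j, T.G.dist v₀ (w j) + j = T.G.dist v₀ (w 0) := fun j => by
      induction j with
      | zero => rfl
      | succ j ih =>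
        rcases T.isTree.dist_eq_dist_add_one_of_adj v₀ (hw j) with h | h
        · omega
        · exact absurd h (hno j)
    have := hdec (T.G.dist v₀ (w 0) + 1)
    omega
  have hinc : ∀ j, k ≤ j → T.G.dist v₀ (w (j + 1)) = T.G.dist v₀ (w j) + 1 := fun j hj => by
    induction j, hj using Nat.le_induction with
    | base => exact hk
    | succ j _ ih =>
      refine T.isTree.dist_eq_add_one_of_ne (hw j) (hw (j + 1)) ih fun h => ?_
      have := hwinj h
      omega
  obtain ⟨n, hn⟩ := hdeg.eventually_unbranched v₀ hinj hv hnbr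
  obtain ⟨l, hl⟩ := hpl.exists_forall_ge_mem (w := fun j => w (max n k + j))
    (fun a b h => by have := hwinj h; omega) (fun j => hw _)
    (fun j => hn (max n k + j + 1) (by omega) _ _ _ (hw _) 
      (hinc (max n k + j) (by omega)) (hFw _) (hFw _) (hw _) (hFw _)) {v₀}
  obtain ⟨i, hi⟩ := hC _ (hl l le_rfl)
  have hfar : w (max n k + l) = v (max n k + l + 1) := by
    have h := hFw (max n k + l)
    rw [hi, hfix] at h
    rw [hi, h]
  have hback : ∀ j, w j = v (j + 1) → w 0 = v 1 := fun j => by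
    induction j with
    | zero => exact id
    | succ j ih =>
      intro h
      refine ih ?_
      rcases hnbr (j + 1) (w j) (by rw [← h]; exact (hw j).symm) with h' | h'
      · exact h'
      · have h'' := hFw j
        rw [h', hfix] at h''
        have := hinj h''
        omega
  rw [← hw0]
  exact hback _ hfar

/-- Along the ray from the base to `infty`, the map `F` acts as a translation. -/
theorem IsPolyLike.exists_map_ray_eq {infty : T.G.end} (hpl : T.IsPolyLike infty) {v₀ : V}
    (hbase : T.IsBase infty v₀) {v : ℕ → V} (hv0 : v 0 = v₀)
    (hv : ∀ i, T.G.Adj (v i) (v (i + 1)))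
    (hnbr : ∀ i u, T.G.Adj (v (i + 1)) u → u = v i ∨ u = v (i + 2))
    (hC : ∀ x ∈ endCompl infty {v₀}, ∃ i, x = v (i + 1)) :
    ∃ a, ∀ i, T.F (v (i + 1)) = v (a + i + 1) := by
  have hFadj : ∀ i, T.G.Adj (T.F (v i)) (T.F (v (i + 1))) := fun i => T.adjMap (hv i)
  have hFnbr : ∀ i u, T.G.Adj (T.F (v (i + 1))) u → u = T.F (v i) ∨ u = T.F (v (i + 2)) := by
    intro i u hu
    obtain ⟨z, hz, rfl⟩ := T.edgeSurj hu
    exact (hnbr i z hz).imp (congrArg T.F) (congrArg T.F)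
  have hFne : ∀ i, T.F (v (i + 2)) ≠ T.F (v i) := fun i h => by
    refine hpl.2.2.2.1 (T.F (v (i + 1))) (Set.ncard_eq_one.2 ⟨T.F (v i), Set.ext fun u => ?_⟩)
    refine ⟨fun hu => ?_, fun hu => ?_⟩
    · rcases hFnbr i u hu with h' | h'
      · exact h'
      · exact h'.trans h
    · rw [Set.mem_singleton_iff.1 hu]
      exact (hFadj i).symm
  have hFbase : ∀ i, T.F (v (i + 1)) ≠ v₀ := fun i h => by
    have := ncard_neighborSet_le_two (hFnbr i)
    rw [h] at this
    have := hbase.1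
    omega
  obtain ⟨n, hn⟩ := hpl.exists_forall_ge_mem (T.isTree.ray_injective hFadj hFne) hFadj hFnbr {v₀}
  have hmem : ∀ k i, n ≤ i + k → T.F (v (i + 1)) ∈ endCompl infty {v₀} := fun k => by
    induction k with
    | zero => exact fun i hi => hn _ (by omega)
    | succ k ih =>
      exact fun i hi => ComponentCompl.mem_of_adj _ _ (ih (i + 1) (by omega))
        (by simpa using hFbase i) (hFadj (i + 1)).symm
  have hidx : ∀ i, ∃ a, T.F (v (i + 1)) = v (a + 1) := fun i => hC _ (hmem n i (by omega))
  have hdown : ∀ a i, T.F (v (i + 1)) = v (a + 1) → T.F (v (i + 2)) ≠ v a := fun a => by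
    induction a with
    | zero => exact fun i _ h => hFbase (i + 1) (h.trans hv0)
    | succ a ih =>
      intro i h h'
      have hadj := hFadj (i + 2)
      rw [h'] at hadj
      rcases hnbr a _ hadj with h'' | h''
      · exact ih (i + 1) h' h''
      · exact hFne (i + 1) (h''.trans h.symm)
  obtain ⟨a, ha⟩ := hidx 0
  refine ⟨a, fun i => ?_⟩
  induction i with
  | zero => exact ha
  | succ i ih =>
    have hadj := hFadj (i + 1)
    rw [ih] at hadj
    rcases hnbr _ _ hadj with h | h
    · exact absurd h (hdown _ _ ih)
    · exact h

end TreeDyn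

/-- **The base is a critical point.**
Let `F : T → T` be a polynomial-like branched covering of a simplicial tree
with local degree function `(dV, dE)` and base `v₀`.  Then the critical
multiplicity `m(v₀) = 2 dV(v₀) − 2 − Σ_{e ∈ E_{v₀}} (dE(e) − 1)` is positive. -/
theorem base_is_critical
    {V : Type} (T : TreeDyn V) (infty : T.G.end)
    (hpl : T.IsPolyLike infty)
    (dV : V → ℕ) (dE : V → V → ℕ) (hdeg : T.IsLocalDeg dV dE)
    (v₀ : V) (hbase : T.IsBase infty v₀) :
    0 < T.multV dV dE v₀ := by
  obtain ⟨v, hv0, hinj, hv, hnbr, hC⟩ := hpl.exists_ray hbase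
  obtain ⟨a, ha⟩ := hpl.exists_map_ray_eq hbase hv0 hv hnbr hC
  have hcrit : ∀ i, T.F v₀ = v (i + 1) → 0 < T.multV dV dE v₀ := fun i hi =>
    hdeg.multV_pos hbase.1 (a := v i) (b := v (i + 2)) (by rw [hi]; exact (hv i).symm)
      (by rw [hi]; exact hv (i + 1)) (by rw [hi]; exact hnbr i)
  have hadj : T.G.Adj (v (a + 1)) (T.F v₀) := by
    rw [← hv0]
    have h := T.adjMap (hv 0)
    rw [ha 0] at h
    exact h.symm
  rcases hnbr a _ hadj with h | h
  · cases a with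
    | succ a => exact hcrit a h
    | zero =>
      exfalso
      have hfix : ∀ i, T.F (v i) = v i := by
        rintro (_ | i)
        · rw [hv0, h, hv0]
        · simpa using ha i
      have hunique : ∀ m x, T.F^[m] x = v 1 → x = v 1 := fun m => by
        induction m with
        | zero => exact fun x hx => hx
        | succ m ih =>
          intro x hx
          exact hpl.eq_of_map_eq hinj hv hnbr hC hfix (ih _ hx)
      obtain ⟨w, ⟨n, m, -, -, hnm⟩, hw⟩ := hpl.2.2.2.2 (v 1)
      rw [Function.iterate_fixed (hfix 1)] at hnm
      rw [hunique m w hnm.symm] at hw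
      exact absurd (ncard_neighborSet_le_two (hnbr 0)) (not_le.2 hw)
  · exact hcrit (a + 1) h
end
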